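/- arXiv:math/0605154 — 3 statements merged into one kernel-verified Lean document; each statement's English description precedes it below -/
import Mathlib

section
/- Let G be a finite simple graph, let H be an induced subgraph of G with exactly one perfect matching M_H, and let P be an M_H-alternating path from p_1 to p_2 and P' an M_H-alternating path from p_3 to p_4, where p_1, p_2, p_3, p_4 are distinct and P and P' share at least one vertex. Let Q be the multiset union of the edges of P and P' (edges common to both paths counted twice). Then exactly one of the following holds: (i) Q is the multiset union of the edges of two M_H-alternating paths, one joining p_1 to p_3 and one joining p_2 to p_4; (ii) Q is the multiset union of the edges of two M_H-alternating paths, one joining p_1 to p_4 and one joining p_2 to p_3. Moreover, if there do not exist two vertex-disjoint paths in G, one joining p_1 to p_3 and one joining p_2 to p_4, whose internal vertices avoid {p_1,p_2,p_3,p_4} (as happens when G is a plane graph and p_1, p_3, p_2, p_4 appear in the cyclic order p_1, p_2, p_3, p_4 on a face), then alternative (i) holds. -/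
/-- A perfect matching of the induced subgraph of `G` on the vertex set `s`,
represented as a set `m` of edges of `G`: every edge of `m` is an edge of `G`
with both endpoints in `s`, and every vertex of `s` lies in exactly one edge of `m`. -/
def IsPMOn {α : Type*} (G : SimpleGraph α) (s : Finset α) (m : Finset (Sym2 α)) : Prop :=
  (∀ e ∈ m, e ∈ G.edgeSet ∧ ∀ v ∈ e, v ∈ s) ∧ ∀ v ∈ s, ∃! e, e ∈ m ∧ v ∈ e

/-- The number of perfect matchings of the induced subgraph of `G` on `s`. -/
noncomputable def pmCount {α : Type*} (G : SimpleGraph α) (s : Finset α) : ℕ :=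
  Nat.card {m : Finset (Sym2 α) // IsPMOn G s m}

open Classical in
/-- The sum, over all perfect matchings of the induced subgraph of `G` on `s`,
of the product of the weights of the edges of the matching. -/
noncomputable def pmSum {α R : Type*} [Fintype α] [DecidableEq α] [CommRing R]
    (G : SimpleGraph α) (w : Sym2 α → R) (s : Finset α) : R :=
  ∑ m ∈ Finset.univ.filter (fun m : Finset (Sym2 α) => IsPMOn G s m), ∏ e ∈ m, w e

/-- There are two vertex-disjoint paths in `G`, one joining `x₁` to `y₁` and one joining
`x₂` to `y₂`, whose internal vertices avoid `S`. -/
def DisjointPaths {α : Type*} (G : SimpleGraph α) (S : Set α) (x₁ y₁ x₂ y₂ : α) : Prop :=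
  ∃ (p : G.Walk x₁ y₁) (q : G.Walk x₂ y₂), p.IsPath ∧ q.IsPath ∧
    (∀ u ∈ p.support, u ∉ q.support) ∧
    (∀ u ∈ p.support, u ≠ x₁ → u ≠ y₁ → u ∉ S) ∧
    (∀ u ∈ q.support, u ≠ x₂ → u ≠ y₂ → u ∉ S)

/-- `G` is noncrossing with respect to the cyclic sequence given by the list `L`:
there are no indices `i < j < k < l` such that `G` contains two vertex-disjoint paths,
one joining `L[i]` to `L[k]` and one joining `L[j]` to `L[l]`, whose internal vertices
avoid the vertices of `L`. -/
def NoncrossingList {α : Type*} (G : SimpleGraph α) (L : List α) : Prop :=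
  ∀ i j k l : Fin L.length, i < j → j < k → k < l →
    ¬ DisjointPaths G {x | x ∈ L} (L.get i) (L.get k) (L.get j) (L.get l)

/-- `U, W` form a bipartition of the vertices of `G`. -/
def IsBipartition {α : Type*} [Fintype α] [DecidableEq α]
    (G : SimpleGraph α) (U W : Finset α) : Prop :=
  Disjoint U W ∧ U ∪ W = Finset.univ ∧
    ∀ ⦃x y⦄, G.Adj x y → ((x ∈ U ∧ y ∈ W) ∨ (x ∈ W ∧ y ∈ U))

/-- `P` is an `MH`-alternating path, where `MH` is the unique perfect matching of the
induced subgraph of `G` on the vertex set `sH`: `P` is a (nontrivial) path, among any two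
consecutive edges of `P` exactly one lies in `MH`, and for each endpoint the incident edge
of `P` lies in `MH` iff the endpoint belongs to `sH`. -/
def IsAltPath {α : Type*} (G : SimpleGraph α) (sH : Finset α) (MH : Finset (Sym2 α))
    {x y : α} (P : G.Walk x y) : Prop :=
  P.IsPath ∧ P.edges ≠ [] ∧
  P.edges.Chain' (fun e f => e ∈ MH ↔ f ∉ MH) ∧
  (∀ e ∈ P.edges.head?, (e ∈ MH ↔ x ∈ sH)) ∧
  (∀ e ∈ P.edges.getLast?, (e ∈ MH ↔ y ∈ sH))

/-- A family of pairwise vertex-disjoint `MH`-alternating paths in `G` whose set of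
path-endpoints is exactly `A`, each vertex of `A` being an endpoint of exactly one
path of the family. -/
def IsAltPathNest {α : Type*} (G : SimpleGraph α) (sH : Finset α) (MH : Finset (Sym2 α))
    (A : Finset α) (F : Finset (Σ x : α, Σ y : α, G.Walk x y)) : Prop :=
  (∀ p ∈ F, IsAltPath G sH MH p.2.2) ∧
  (∀ p ∈ F, ∀ q ∈ F, p ≠ q → ∀ u ∈ p.2.2.support, u ∉ q.2.2.support) ∧
  (∀ p ∈ F, p.1 ∈ A ∧ p.2.1 ∈ A) ∧
  (∀ v ∈ A, ∃! p, p ∈ F ∧ (v = p.1 ∨ v = p.2.1))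

/-- A 1-factor on `{1, …, n}`: a partition of `Fin n` into pairs, each pair recorded
as an ordered pair `(i, j)` with `i < j`. -/
def IsOneFactor (n : ℕ) (F : Finset (Fin n × Fin n)) : Prop :=
  (∀ p ∈ F, p.1 < p.2) ∧ ∀ v : Fin n, ∃! p, p ∈ F ∧ (v = p.1 ∨ v = p.2)

/-- The crossing number of a 1-factor: the number of pairs of pairs
`(i,j), (k,l)` in `F` with `i < k < j < l`. -/
def crossingNumber (n : ℕ) (F : Finset (Fin n × Fin n)) : ℕ :=
  ((F ×ˢ F).filter (fun q => q.1.1 < q.2.1 ∧ q.2.1 < q.1.2 ∧ q.1.2 < q.2.2)).card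

/-!
Record an alternating path by the list of starting points of its matching edges. Reversing the path
reverses the list and replaces every entry by its partner in the matching, and consecutive entries
are related by a relation which, because the matching is unique, admits no closed chain: shifting
the matching along such a chain would give another perfect matching.

Any two alternating paths that meet share a matching edge. Induction along the first path, in which
every obstruction produces a forbidden closed chain, finds a common matching edge `e = uv` that,
after reversing the second path if necessary, both paths traverse from `u` to `v` and such that the
head of either path before `e` is disjoint from the tail of the other after `e`. Exchanging the
tails at `e` gives one of the two repartitions. As `e` separates the two heads from the two tails in
the union of the paths, and carries multiplicity two in `Q`, a path between the starting points that
belongs to the other repartition would have to use `e` and cross back without it, so the other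
repartition is impossible. Finally, the two heads and the two tails contain vertex-disjoint
paths joining the starting points and the end points.
-/

section SkewLists

variable {V : Type*} {σ : V → V} {R : V → V → Prop}

/-- The orbit of `x` under the involution `σ`: the matching edge at `x`, when `σ` sends every
vertex to its partner. -/
def matePair (σ : V → V) (x : V) : Sym2 V := s(x, σ x)

/-- The list `l` traversed backwards, with every entry replaced by its mate. If the entries are the
starting points of the matching edges of a walk, these are the ones of the reversed walk. -/
def mateReverse (σ : V → V) (l : List V) : List V := (l.map σ).reverse

open Classical in
/-- The number of entries of `l` whose `σ`-orbit is `e`. -/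
noncomputable def mateCount (σ : V → V) (e : Sym2 V) (l : List V) : ℕ :=
  (l.map (matePair σ)).count e

/-- The entries of `l` lie in pairwise distinct `σ`-orbits. -/
def MateNodup (σ : V → V) (l : List V) : Prop := ∀ e, mateCount σ e l ≤ 1

/-- No `σ`-orbit meets both `l` and `m`. -/
def MateDisjoint (σ : V → V) (l m : List V) : Prop :=
  ∀ e, mateCount σ e l = 0 ∨ mateCount σ e m = 0

/-- `x, l, y` is a chain for `R`: the list `l` leads from `x` to `y`. -/
def Link (R : V → V → Prop) (x : V) (l : List V) (y : V) : Prop := (x :: (l ++ [y])).IsChain R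

/-- An involution `σ` and a relation `R` that is reversed by `σ` and has no closed chain through
pairwise distinct `σ`-orbits. -/
structure IsAcyclicSkew (σ : V → V) (R : V → V → Prop) : Prop where
  involutive : Function.Involutive σ
  skew : ∀ {x y}, R x y → R (σ y) (σ x)
  acyclic : ∀ {x l}, MateNodup σ (x :: l) → ¬ Link R x l x

/-- Exchanging the tails of `p` and `q` at a common entry `g` gives two lists that are again
simple: the head of either list shares no `σ`-orbit with the tail of the other. -/
def HasCut (σ : V → V) (p q : List V) : Prop :=
  ∃ A g B C D, p = A ++ g :: B ∧ q = C ++ g :: D ∧ MateDisjoint σ A D ∧ MateDisjoint σ C B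

theorem matePair_apply (hσ : σ.Involutive) (x : V) : matePair σ (σ x) = matePair σ x := by
  rw [matePair, matePair, hσ x, Sym2.eq_swap]

theorem matePair_eq_matePair_iff (hσ : σ.Involutive) {x y : V} :
    matePair σ x = matePair σ y ↔ x = y ∨ σ x = y := by
  rw [matePair, matePair, Sym2.eq_iff]
  grind [hσ x, hσ y]

theorem map_matePair_mateReverse (hσ : σ.Involutive) (l : List V) :
    (mateReverse σ l).map (matePair σ) = (l.map (matePair σ)).reverse := by
  simp [mateReverse, matePair_apply hσ]

theorem mateReverse_mateReverse (hσ : σ.Involutive) (l : List V) :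
    mateReverse σ (mateReverse σ l) = l := by
  simp [mateReverse, hσ.comp_self]

@[grind =]
theorem mateCount_cons (e : Sym2 V) (x : V) (l : List V) :
    mateCount σ e (x :: l) = mateCount σ e [x] + mateCount σ e l := by
  classical
  simp only [mateCount, ← List.count_append, ← List.map_append, List.singleton_append]

@[grind =]
theorem mateCount_append (e : Sym2 V) (l m : List V) :
    mateCount σ e (l ++ m) = mateCount σ e l + mateCount σ e m := by
  simp [mateCount]

theorem mateCount_mateReverse (hσ : σ.Involutive) (e : Sym2 V) (l : List V) :
    mateCount σ e (mateReverse σ l) = mateCount σ e l := by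
  simp [mateCount, map_matePair_mateReverse hσ]

theorem mateCount_singleton_apply (hσ : σ.Involutive) (e : Sym2 V) (x : V) :
    mateCount σ e [σ x] = mateCount σ e [x] :=
  mateCount_mateReverse hσ e [x]

theorem mateCount_matePair_singleton (x : V) : mateCount σ (matePair σ x) [x] = 1 := by
  simp [mateCount]

theorem mateNodup_iff_nodup_map {l : List V} :
    MateNodup σ l ↔ (l.map (matePair σ)).Nodup := by
  classical
  exact List.nodup_iff_count_le_one.symm

theorem mateDisjoint_iff_disjoint_map {l m : List V} :
    MateDisjoint σ l m ↔ (l.map (matePair σ)).Disjoint (m.map (matePair σ)) := by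
  simp only [MateDisjoint, mateCount, List.count_eq_zero, List.Disjoint, ← not_and_or, not_and]

theorem mateNodup_mateReverse (hσ : σ.Involutive) {l : List V} :
    MateNodup σ (mateReverse σ l) ↔ MateNodup σ l := by
  simp only [MateNodup, mateCount_mateReverse hσ]

theorem mateDisjoint_comm {l m : List V} : MateDisjoint σ l m ↔ MateDisjoint σ m l :=
  forall_congr' fun _ => or_comm

theorem not_mateDisjoint_iff (hσ : σ.Involutive) {l m : List V} :
    ¬ MateDisjoint σ l m ↔ ∃ x ∈ l, x ∈ m ∨ σ x ∈ m := by
  simp only [mateDisjoint_iff_disjoint_map, List.Disjoint, List.mem_map]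
  grind [matePair_eq_matePair_iff hσ]

theorem exists_first_mate (hσ : σ.Involutive) {l m : List V} (h : ¬ MateDisjoint σ l m) :
    ∃ l₁ x l₂, l = l₁ ++ x :: l₂ ∧ MateDisjoint σ l₁ m ∧ (x ∈ m ∨ σ x ∈ m) := by
  classical
  obtain ⟨x, hxl, hxm⟩ := (not_mateDisjoint_iff hσ).mp h
  obtain ⟨y, hy⟩ : ∃ y, l.find? (fun y => y ∈ m ∨ σ y ∈ m) = some y :=
    Option.isSome_iff_exists.mp (List.find?_isSome.mpr ⟨x, hxl, decide_eq_true hxm⟩)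
  obtain ⟨hym, l₁, l₂, rfl, hfirst⟩ := List.find?_eq_some_iff_append.mp hy
  refine ⟨l₁, y, l₂, rfl, ?_, of_decide_eq_true hym⟩
  rw [← not_not (a := MateDisjoint σ l₁ m), not_mateDisjoint_iff hσ]
  rintro ⟨w, hw, hwm⟩
  simpa [hwm] using hfirst w hw

theorem isChain_cons_append_cons_iff {x y : V} {l m : List V} :
    (x :: (l ++ y :: m)).IsChain R ↔ Link R x l y ∧ (y :: m).IsChain R :=
  List.isChain_split (l₁ := x :: l)

theorem link_append_cons_iff {x y z : V} {l m : List V} :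
    Link R x (l ++ y :: m) z ↔ Link R x l y ∧ Link R y m z := by
  rw [Link, List.append_assoc, List.cons_append, isChain_cons_append_cons_iff, ← Link]

theorem Link.trans {x y z : V} {l m : List V} (h : Link R x l y) (h' : Link R y m z) :
    Link R x (l ++ y :: m) z :=
  link_append_cons_iff.mpr ⟨h, h'⟩

theorem hasCut_cons_of_mateDisjoint {z : V} {p q : List V}
    (hpq : MateDisjoint σ p q) (hz : z ∈ q) : HasCut σ (z :: p) q := by
  obtain ⟨C, D, rfl⟩ := List.append_of_mem hz
  exact ⟨[], z, p, C, D, rfl, rfl, fun e => .inl rfl, fun e => by grind [hpq e]⟩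

namespace IsAcyclicSkew

theorem isChain_mateReverse (hR : IsAcyclicSkew σ R) {l : List V} (hl : l.IsChain R) :
    (mateReverse σ l).IsChain R := by
  rw [mateReverse, List.isChain_reverse, List.isChain_map]
  exact hl.imp fun _ _ => hR.skew

theorem link_mateReverse (hR : IsAcyclicSkew σ R) {x x' y y' : V} {l : List V}
    (h : Link R x l y) (hx : σ x = x') (hy : σ y = y') : Link R y' (mateReverse σ l) x' := by
  subst hx hy
  simpa [Link, mateReverse] using hR.isChain_mateReverse h

/-- If the second list passes `g`, then the mate of `z`, then `h`, any later meeting with the first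
list closes up a chain: directly, back through `g` and `z`, or back through `z` and on to `g`. -/
theorem mateDisjoint_after_second_meeting (hR : IsAcyclicSkew σ R) {z g h : V}
    {A B₁ B₂ D₁ D₂ D₃ : List V}
    (hp : (z :: (A ++ g :: (B₁ ++ h :: B₂))).IsChain R)
    (hq : (g :: (D₁ ++ σ z :: (D₂ ++ h :: D₃))).IsChain R)
    (hpn : MateNodup σ (z :: (A ++ g :: (B₁ ++ h :: B₂))))
    (hqn : MateNodup σ (g :: (D₁ ++ σ z :: (D₂ ++ h :: D₃))))
    (hAD : MateDisjoint σ A (D₁ ++ σ z :: (D₂ ++ h :: D₃)))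
    (hBD : MateDisjoint σ B₁ (D₂ ++ h :: D₃)) :
    MateDisjoint σ (D₁ ++ σ z :: D₂) B₂ := by
  rw [mateDisjoint_comm]
  by_contra hmeet
  obtain ⟨B₃, y, B₄, rfl, hB₃, hy⟩ := exists_first_mate hR.involutive hmeet
  simp only [isChain_cons_append_cons_iff] at hp hq
  obtain ⟨hzg, hgh, hhy, -⟩ := hp
  obtain ⟨hgz, hzh, -⟩ := hq
  have hσ := hR.involutive
  obtain hy | hy := hy
  · obtain ⟨K₁, K₂, hK⟩ := List.append_of_mem hy
    have hyh : Link R y K₂ h := (link_append_cons_iff.mp (hK ▸ hgz.trans hzh)).2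
    refine hR.acyclic (fun e => ?_) (hhy.trans hyh)
    have := congrArg (mateCount σ e) hK
    grind [hpn e, hqn e, hB₃ e]
  · obtain hy | hy | hy : σ y ∈ D₁ ∨ y = z ∨ σ y ∈ D₂ := by
      simpa [hσ.injective.eq_iff] using hy
    · obtain ⟨K₁, K₂, rfl⟩ := List.append_of_mem hy
      obtain ⟨hgy, -⟩ := link_append_cons_iff.mp hgz
      refine hR.acyclic (fun e => ?_) (hhy.trans <|
        (hR.link_mateReverse hgy rfl (hσ y)).trans <| (hR.link_mateReverse hzg rfl rfl).trans hzh)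
      grind [hpn e, hqn e, hAD e, hB₃ e, mateCount_mateReverse, mateCount_singleton_apply]
    · grind [hpn (matePair σ z), mateCount_matePair_singleton]
    · obtain ⟨K₁, K₂, rfl⟩ := List.append_of_mem hy
      obtain ⟨hzy, -⟩ := link_append_cons_iff.mp hzh
      refine hR.acyclic (fun e => ?_) (hhy.trans <|
        (hR.link_mateReverse hzy (hσ z) (hσ y)).trans <| hzg.trans hgh)
      grind [hpn e, hqn e, hAD e, hBD e, hB₃ e, mateCount_mateReverse, mateCount_singleton_apply]

theorem hasCut_cons_of_mate_mem (hR : IsAcyclicSkew σ R) {z g : V} {A B C D₁ D₂ : List V}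
    (hp : (z :: (A ++ g :: B)).IsChain R) (hq : (C ++ g :: (D₁ ++ σ z :: D₂)).IsChain R)
    (hpn : MateNodup σ (z :: (A ++ g :: B))) (hqn : MateNodup σ (C ++ g :: (D₁ ++ σ z :: D₂)))
    (hAD : MateDisjoint σ A (D₁ ++ σ z :: D₂)) (hCB : MateDisjoint σ C B) :
    HasCut σ (z :: (A ++ g :: B)) (C ++ g :: (D₁ ++ σ z :: D₂)) ∨
      HasCut σ (z :: (A ++ g :: B)) (mateReverse σ (C ++ g :: (D₁ ++ σ z :: D₂))) := by
  have hσ := hR.involutive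
  by_cases hBD : MateDisjoint σ B D₂
  · right
    refine ⟨[], z, A ++ g :: B, mateReverse σ D₂, mateReverse σ (C ++ g :: D₁), rfl, ?_,
      fun e => .inl rfl, fun e => ?_⟩
    · simp [mateReverse, hσ z]
    · grind [hqn e, hAD e, hBD e, mateCount_mateReverse]
  left
  obtain ⟨B₁, h, B₂, rfl, hB₁, hh⟩ := exists_first_mate hσ hBD
  have hq' : (g :: (D₁ ++ σ z :: D₂)).IsChain R := hq.right_of_append
  obtain ⟨D₂, D₃, rfl⟩ | ⟨D₂, D₃, rfl⟩ := hh.imp List.append_of_mem List.append_of_mem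
  · have hDB : MateDisjoint σ (D₁ ++ σ z :: D₂) B₂ :=
      hR.mateDisjoint_after_second_meeting hp hq' hpn
        (fun e => by grind [hqn e]) hAD hB₁
    refine ⟨z :: (A ++ g :: B₁), h, B₂, C ++ g :: (D₁ ++ σ z :: D₂), D₃, by simp, by simp,
      fun e => ?_, fun e => ?_⟩
    · grind [hqn e, hAD e, hB₁ e, mateCount_singleton_apply]
    · grind [hpn e, hCB e, hDB e]
  · simp only [isChain_cons_append_cons_iff] at hp hq'
    obtain ⟨hzg, hgh, -⟩ := hp
    obtain ⟨-, hzh, -⟩ := hq'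
    refine absurd (hzh.trans <| (hR.link_mateReverse hgh rfl rfl).trans <|
      hR.link_mateReverse hzg rfl rfl) (hR.acyclic fun e => ?_)
    grind [hpn e, hqn e, hAD e, hB₁ e, mateCount_mateReverse, mateCount_singleton_apply]

theorem hasCut_cons (hR : IsAcyclicSkew σ R) {z : V} {p q : List V}
    (hp : (z :: p).IsChain R) (hq : q.IsChain R)
    (hpn : MateNodup σ (z :: p)) (hqn : MateNodup σ q) (hcut : HasCut σ p q) :
    HasCut σ (z :: p) q ∨ HasCut σ (z :: p) (mateReverse σ q) := by
  have hσ := hR.involutive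
  obtain ⟨A, g, B, C, D, rfl, rfl, hAD, hCB⟩ := hcut
  by_cases hzD : MateDisjoint σ [z] D
  · exact .inl ⟨z :: A, g, B, C, D, rfl, rfl, fun e => by grind [hAD e, hzD e], hCB⟩
  obtain hz | hz : z ∈ D ∨ σ z ∈ D := by simpa using (not_mateDisjoint_iff hσ).mp hzD
  all_goals obtain ⟨D₁, D₂, rfl⟩ := List.append_of_mem hz
  · have hzg := (isChain_cons_append_cons_iff.mp hp).1
    have hgz := (isChain_cons_append_cons_iff.mp hq.right_of_append).1
    refine absurd (hgz.trans hzg) (hR.acyclic fun e => ?_)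
    grind [hpn e, hqn e, hAD e]
  · exact hR.hasCut_cons_of_mate_mem hp hq hpn hqn hAD hCB

theorem hasCut_or_hasCut_mateReverse (hR : IsAcyclicSkew σ R) {p q : List V}
    (hp : p.IsChain R) (hq : q.IsChain R) (hpn : MateNodup σ p) (hqn : MateNodup σ q)
    (hmeet : ¬ MateDisjoint σ p q) : HasCut σ p q ∨ HasCut σ p (mateReverse σ q) := by
  have hσ := hR.involutive
  induction p with
  | nil => exact absurd (fun e => .inl rfl) hmeet
  | cons z p ih =>
    by_cases hpq : MateDisjoint σ p q
    · obtain hz | hz : z ∈ q ∨ σ z ∈ q := by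
        have := (not_mateDisjoint_iff hσ).mp hmeet
        have := mt (not_mateDisjoint_iff hσ).mpr (not_not.mpr hpq)
        grind
      · exact .inl (hasCut_cons_of_mateDisjoint hpq hz)
      · refine .inr (hasCut_cons_of_mateDisjoint (fun e => ?_) ?_)
        · simpa only [mateCount_mateReverse hσ] using hpq e
        · simpa [mateReverse] using ⟨σ z, hz, hσ z⟩
    · obtain hcut | hcut := ih hp.tail (fun e => by grind [hpn e]) hpq
      · exact hR.hasCut_cons hp hq hpn hqn hcut
      · have hqn' := (mateNodup_mateReverse hσ).mpr hqn
        simpa only [mateReverse_mateReverse hσ, or_comm] using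
          hR.hasCut_cons hp (hR.isChain_mateReverse hq) hpn hqn' hcut

end IsAcyclicSkew
end SkewLists

section Matching

variable {α : Type*} {G : SimpleGraph α} {s : Finset α} {m : Finset (Sym2 α)}

open Classical in
/-- The partner of `x` in the set of edges `m`. Vertices that `m` leaves uncovered are their own
partner, which makes `mate m` an involution when `m` is a matching. -/
noncomputable def mate (m : Finset (Sym2 α)) (x : α) : α :=
  if h : ∃ y, s(x, y) ∈ m then h.choose else x

/-- From the starting point `x` of a matching edge, an alternating walk can cross that edge and then
move on to `y`, the starting point of the next matching edge. -/
def AltStep (G : SimpleGraph α) (s : Finset α) (m : Finset (Sym2 α)) (x y : α) : Prop :=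
  x ∈ s ∧ y ∈ s ∧ x ≠ y ∧ G.Adj (mate m x) y

namespace IsPMOn

theorem mem_of_mem (hm : IsPMOn G s m) {e : Sym2 α} {x : α} (he : e ∈ m) (hx : x ∈ e) : x ∈ s :=
  (hm.1 e he).2 x hx

theorem mate_eq (hm : IsPMOn G s m) {x y : α} (h : s(x, y) ∈ m) : mate m x = y := by
  have hex : ∃ y, s(x, y) ∈ m := ⟨y, h⟩
  rw [mate, dif_pos hex]
  exact Sym2.congr_right.mp ((hm.2 x (hm.mem_of_mem h (Sym2.mem_mk_left x y))).unique
    ⟨hex.choose_spec, Sym2.mem_mk_left _ _⟩ ⟨h, Sym2.mem_mk_left _ _⟩)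

theorem eq_matePair (hm : IsPMOn G s m) {e : Sym2 α} {x : α} (he : e ∈ m) (hx : x ∈ e) :
    e = matePair (mate m) x := by
  obtain ⟨y, rfl⟩ := hx
  rw [matePair, hm.mate_eq he]

theorem matePair_mem (hm : IsPMOn G s m) {x : α} (hx : x ∈ s) : matePair (mate m) x ∈ m := by
  obtain ⟨e, ⟨he, hxe⟩, -⟩ := hm.2 x hx
  exact hm.eq_matePair he hxe ▸ he

theorem adj_mate (hm : IsPMOn G s m) {x : α} (hx : x ∈ s) : G.Adj x (mate m x) :=
  (hm.1 _ (hm.matePair_mem hx)).1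

theorem mate_mem (hm : IsPMOn G s m) {x : α} (hx : x ∈ s) : mate m x ∈ s :=
  hm.mem_of_mem (hm.matePair_mem hx) (Sym2.mem_mk_right _ _)

theorem involutive_mate (hm : IsPMOn G s m) : Function.Involutive (mate m) := by
  intro x
  by_cases h : ∃ y, s(x, y) ∈ m
  · obtain ⟨y, hxy⟩ := h
    rw [hm.mate_eq hxy, hm.mate_eq (Sym2.eq_swap ▸ hxy)]
  · have hx : mate m x = x := dif_neg h
    rw [hx, hx]

end IsPMOn

open Classical in
theorem isPMOn_image_of_involutive {τ : α → α} (hτ : τ.Involutive) (hs : ∀ v ∈ s, τ v ∈ s)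
    (hadj : ∀ v ∈ s, G.Adj v (τ v)) : IsPMOn G s (s.image (matePair τ)) := by
  constructor
  · simp only [Finset.forall_mem_image, matePair, Sym2.mem_iff, forall_eq_or_imp, forall_eq]
    exact fun v hv => ⟨hadj v hv, hv, hs v hv⟩
  · refine fun v hv => ⟨matePair τ v, ⟨Finset.mem_image_of_mem _ hv, Sym2.mem_mk_left _ _⟩, ?_⟩
    rintro _ ⟨he, hve⟩
    obtain ⟨w, -, rfl⟩ := Finset.mem_image.mp he
    obtain rfl | rfl := Sym2.mem_iff.mp hve
    · rfl
    · exact (matePair_apply hτ w).symm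

theorem Link.apply_formPerm [DecidableEq α] {R : α → α → Prop} {x y : α} {l : List α}
    (h : Link R x l x) (hnodup : (x :: l).Nodup) (hy : y ∈ x :: l) :
    R y ((x :: l).formPerm y) := by
  obtain ⟨n, hn, rfl⟩ := List.mem_iff_getElem.mp hy
  have hstep := List.isChain_iff_getElem.mp h n (by simpa using hn)
  obtain hlt | rfl : n + 1 < (x :: l).length ∨ n = l.length := by grind
  · rw [List.formPerm_apply_lt_getElem _ hnodup n hlt]
    grind
  · rw [List.formPerm_apply_getElem_length]
    grind

theorem IsPMOn.adj_formPerm_of_link [DecidableEq α] (hm : IsPMOn G s m) {x : α} {l : List α}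
    (hl : Link (AltStep G s m) x l x) (hnodup : MateNodup (mate m) (x :: l)) {v : α} (hv : v ∈ s) :
    G.Adj ((x :: l).formPerm v) ((x :: l).formPerm (mate m v)) := by
  have hσ := hm.involutive_mate
  have hnodup' := mateNodup_iff_nodup_map.mp hnodup
  have hstep {y} (hy : y ∈ x :: l) := hl.apply_formPerm hnodup'.of_map hy
  by_cases hvl : v ∈ x :: l <;> by_cases hvl' : mate m v ∈ x :: l
  · exact absurd (List.inj_on_of_nodup_map hnodup' hvl' hvl (matePair_apply hσ v))
      (hm.adj_mate hv).ne'
  · rw [List.formPerm_apply_of_notMem hvl']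
    exact (hstep hvl).2.2.2.symm
  · rw [List.formPerm_apply_of_notMem hvl]
    simpa only [hσ v] using (hstep hvl').2.2.2
  · rw [List.formPerm_apply_of_notMem hvl, List.formPerm_apply_of_notMem hvl']
    exact hm.adj_mate hv

open Classical in
/-- Shifting a perfect matching along a closed alternating chain gives a perfect matching. -/
theorem IsPMOn.isPMOn_image_conj_formPerm (hm : IsPMOn G s m) {x : α} {l : List α}
    (hl : Link (AltStep G s m) x l x) (hnodup : MateNodup (mate m) (x :: l)) :
    IsPMOn G s (s.image (matePair ((x :: l).formPerm ∘ mate m ∘ (x :: l).formPerm.symm))) := by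
  have hmem {y} : (x :: l).formPerm y ∈ s ↔ y ∈ s := by
    by_cases hy : y ∈ x :: l
    · obtain ⟨hys, hys', -⟩ := hl.apply_formPerm (mateNodup_iff_nodup_map.mp hnodup).of_map hy
      exact iff_of_true hys' hys
    · rw [List.formPerm_apply_of_notMem hy]
  generalize hπ : (x :: l).formPerm = π at hmem ⊢
  have hmem' {y} (hy : y ∈ s) : π.symm y ∈ s := by rwa [← hmem, π.apply_symm_apply]
  refine isPMOn_image_of_involutive (fun v => ?_)
    (fun v hv => hmem.mpr (hm.mate_mem (hmem' hv))) (fun v hv => ?_)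
  · simp only [Function.comp_apply, π.symm_apply_apply, hm.involutive_mate _, π.apply_symm_apply]
  · have hadj := hm.adj_formPerm_of_link hl hnodup (hmem' hv)
    rwa [hπ, π.apply_symm_apply] at hadj

theorem IsPMOn.not_link_self (hm : IsPMOn G s m) (huniq : ∀ m', IsPMOn G s m' → m' = m) {x : α}
    {l : List α} (hnodup : MateNodup (mate m) (x :: l)) : ¬ Link (AltStep G s m) x l x := by
  classical
  intro hl
  have hnodup' := mateNodup_iff_nodup_map.mp hnodup
  obtain ⟨hxs, hxs', hne, -⟩ := hl.apply_formPerm hnodup'.of_map List.mem_cons_self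
  have hmate : mate m x ∉ x :: l := fun h => (hm.adj_mate hxs).ne'
    (List.inj_on_of_nodup_map hnodup' h List.mem_cons_self (matePair_apply hm.involutive_mate x))
  have hshift := huniq _ (hm.isPMOn_image_conj_formPerm hl hnodup) ▸
    Finset.mem_image_of_mem _ hxs'
  have hpartner : mate m ((x :: l).formPerm x) = mate m x := by
    simpa [List.formPerm_apply_of_notMem hmate] using hm.mate_eq hshift
  exact hne (hm.involutive_mate.injective hpartner).symm

theorem IsPMOn.isAcyclicSkew (hm : IsPMOn G s m) (huniq : ∀ m', IsPMOn G s m' → m' = m) :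
    IsAcyclicSkew (mate m) (AltStep G s m) where
  involutive := hm.involutive_mate
  skew := fun ⟨hx, hy, hne, hadj⟩ =>
    ⟨hm.mate_mem hy, hm.mate_mem hx, hm.involutive_mate.injective.ne hne.symm,
      (hm.involutive_mate _).symm ▸ hadj.symm⟩
  acyclic := hm.not_link_self huniq

end Matching

section MatchedStarts

open SimpleGraph

variable {α : Type*} {G : SimpleGraph α} {s : Finset α} {M : Finset (Sym2 α)}

open Classical in
/-- The starting points of those steps of the walk `p` that traverse an edge of `M`, in the order
of `p`. -/
noncomputable def matchedStarts (M : Finset (Sym2 α)) {x y : α} (p : G.Walk x y) : List α :=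
  (p.darts.filter (·.edge ∈ M)).map (·.fst)

theorem matchedStarts_cons_of_mem {u v y : α} (h : G.Adj u v) (p : G.Walk v y)
    (hM : s(u, v) ∈ M) : matchedStarts M (.cons h p) = u :: matchedStarts M p := by
  simp [matchedStarts, Dart.edge, hM]

theorem matchedStarts_cons_of_notMem {u v y : α} (h : G.Adj u v) (p : G.Walk v y)
    (hM : s(u, v) ∉ M) : matchedStarts M (.cons h p) = matchedStarts M p := by
  simp [matchedStarts, Dart.edge, hM]

open Classical in
theorem IsPMOn.map_matePair_matchedStarts (hM : IsPMOn G s M) {x y : α} (p : G.Walk x y) :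
    (matchedStarts M p).map (matePair (mate M)) = p.edges.filter (· ∈ M) := by
  induction p with
  | nil => rfl
  | @cons u v y h p ih =>
    by_cases hmem : s(u, v) ∈ M
    · simp [matchedStarts_cons_of_mem h p hmem, ih, hmem, matePair, hM.mate_eq hmem]
    · simp [matchedStarts_cons_of_notMem h p hmem, ih, hmem]

theorem IsPMOn.matePair_mem_map_matchedStarts (hM : IsPMOn G s M) {x y w : α} {p : G.Walk x y}
    {e : Sym2 α} (he : e ∈ p.edges) (heM : e ∈ M) (hw : w ∈ e) :
    matePair (mate M) w ∈ (matchedStarts M p).map (matePair (mate M)) := by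
  rw [hM.map_matePair_matchedStarts, ← hM.eq_matePair heM hw]
  simpa using ⟨he, heM⟩

theorem IsPMOn.mateNodup_matchedStarts (hM : IsPMOn G s M) {x y : α} {p : G.Walk x y}
    (hp : p.IsTrail) : MateNodup (mate M) (matchedStarts M p) := by
  rw [mateNodup_iff_nodup_map, hM.map_matePair_matchedStarts]
  exact hp.edges_nodup.filter _

theorem IsPMOn.matchedStarts_reverse (hM : IsPMOn G s M) {x y : α} (p : G.Walk x y) :
    matchedStarts M p.reverse = mateReverse (mate M) (matchedStarts M p) := by
  classical
  simp only [matchedStarts, mateReverse, Walk.darts_reverse, List.filter_reverse, List.filter_map,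
    List.map_reverse, List.map_map]
  have hsnd : ∀ d ∈ p.darts.filter (·.edge ∈ M), d.symm.fst = mate M d.fst := fun d hd =>
    (hM.mate_eq (of_decide_eq_true (List.mem_filter.mp hd).2)).symm
  simpa [Function.comp_def] using hsnd

theorem matchedStarts_eq_append_cons {x y a : α} {X Y : List α} {p : G.Walk x y}
    (hp : matchedStarts M p = X ++ a :: Y) :
    ∃ (b : α) (h : G.Adj a b) (A : G.Walk x a) (B : G.Walk b y), s(a, b) ∈ M ∧
      p = A.append (.cons h B) ∧ matchedStarts M A = X ∧ matchedStarts M B = Y := by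
  induction p generalizing X with
  | nil => simp [matchedStarts] at hp
  | @cons u v y h p ih =>
    by_cases hmem : s(u, v) ∈ M
    · rw [matchedStarts_cons_of_mem h p hmem] at hp
      obtain ⟨rfl, rfl, rfl⟩ | ⟨X', rfl, hX'⟩ := List.cons_eq_append_iff.mp hp |>.imp
        (fun h => by simpa using h) id
      · exact ⟨v, h, .nil, p, hmem, rfl, rfl, rfl⟩
      · obtain ⟨b, h', A, B, hb, rfl, rfl, rfl⟩ := ih hX'
        exact ⟨b, h', .cons h A, B, hb, rfl, matchedStarts_cons_of_mem h A hmem, rfl⟩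
    · rw [matchedStarts_cons_of_notMem h p hmem] at hp
      obtain ⟨b, h', A, B, hb, rfl, rfl, rfl⟩ := ih hp
      exact ⟨b, h', .cons h A, B, hb, rfl, matchedStarts_cons_of_notMem h A hmem, rfl⟩

theorem IsPMOn.isChain_altStep_matchedStarts (hM : IsPMOn G s M) {x y : α} {p : G.Walk x y}
    (hp : p.IsPath) (halt : p.edges.IsChain fun e f => e ∈ M ↔ f ∉ M) :
    (matchedStarts M p).IsChain (AltStep G s M) := by
  match p with
  | .nil => exact .nil
  | .cons (u := u) (v := v) h p =>
    have ih := hM.isChain_altStep_matchedStarts hp.of_cons halt.tail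
    by_cases huv : s(u, v) ∉ M
    · rwa [matchedStarts_cons_of_notMem h p huv]
    rw [not_not] at huv
    rw [matchedStarts_cons_of_mem h p huv]
    match p with
    | .nil => exact .singleton u
    | .cons (v := w) h' p =>
      have hvw : s(v, w) ∉ M := (List.isChain_cons_cons.mp halt).1.mp huv
      rw [matchedStarts_cons_of_notMem h' p hvw] at ih ⊢
      match p with
      | .nil => exact .singleton u
      | .cons (v := z) h'' p =>
        have hwz : s(w, z) ∈ M :=
          not_not.mp (mt (List.isChain_cons_cons.mp (List.isChain_cons_cons.mp halt).2).1.mpr hvw)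
        rw [matchedStarts_cons_of_mem h'' p hwz] at ih ⊢
        refine .cons_cons ⟨hM.mem_of_mem huv (Sym2.mem_mk_left u v),
          hM.mem_of_mem hwz (Sym2.mem_mk_left w z), ?_, (hM.mate_eq huv).symm ▸ h'⟩ ih
        rintro rfl
        simp at hp

end MatchedStarts

section AltPath

open SimpleGraph

variable {α : Type*} {G : SimpleGraph α} {s : Finset α} {M : Finset (Sym2 α)}

theorem isPath_append_cons_iff {x u v y : α} {h : G.Adj u v} {p : G.Walk x u} {q : G.Walk v y} :
    (p.append (.cons h q)).IsPath ↔
      (p.concat h).IsPath ∧ (Walk.cons h q).IsPath ∧ p.support.Disjoint q.support := by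
  have hsupport : (p.append (.cons h q)).support = p.support ++ q.support := by
    simp [Walk.support_append]
  rw [Walk.isPath_def, hsupport, List.nodup_append', Walk.concat_isPath_iff, Walk.cons_isPath_iff,
    ← Walk.isPath_def, ← Walk.isPath_def]
  exact ⟨fun ⟨hp, hq, hpq⟩ => ⟨⟨hp, fun hv => hpq hv q.start_mem_support⟩,
    ⟨hq, hpq p.end_mem_support⟩, hpq⟩,
    fun ⟨⟨hp, _⟩, ⟨hq, _⟩, hpq⟩ => ⟨hp, hq, hpq⟩⟩

theorem isAltPath_iff {x y : α} {P : G.Walk x y} :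
    IsAltPath G s M P ↔
      P.IsPath ∧ P.edges ≠ [] ∧ P.edges.IsChain (fun e f => e ∈ M ↔ f ∉ M) ∧
        (∀ e ∈ P.edges.head?, (e ∈ M ↔ x ∈ s)) ∧ ∀ e ∈ P.edges.getLast?, (e ∈ M ↔ y ∈ s) :=
  Iff.rfl

theorem IsAltPath.reverse {x y : α} {P : G.Walk x y} (hP : IsAltPath G s M P) :
    IsAltPath G s M P.reverse := by
  obtain ⟨hpath, hne, halt, hhead, hlast⟩ := isAltPath_iff.mp hP
  refine isAltPath_iff.mpr ⟨hpath.reverse, ?_, ?_, ?_, ?_⟩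
  · simpa using hne
  · rw [Walk.edges_reverse, List.isChain_reverse]
    exact halt.imp fun _ _ => by tauto
  · simpa using hlast
  · simpa using hhead

theorem isAltPath_append_cons_iff {x u v y : α} {h : G.Adj u v} {p : G.Walk x u} {q : G.Walk v y}
    (hM : IsPMOn G s M) (huv : s(u, v) ∈ M) :
    IsAltPath G s M (p.append (.cons h q)) ↔
      IsAltPath G s M (p.concat h) ∧ IsAltPath G s M (.cons h q) ∧
        p.support.Disjoint q.support := by
  have hu := hM.mem_of_mem huv (Sym2.mem_mk_left u v)
  have hv := hM.mem_of_mem huv (Sym2.mem_mk_right u v)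
  simp only [isAltPath_iff, isPath_append_cons_iff, Walk.edges_append, Walk.edges_cons,
    Walk.edges_concat, List.concat_eq_append]
  rw [List.isChain_split]
  simp only [List.head?_append, List.head?_cons, List.getLast?_append, List.getLast?_cons,
    List.getLast?_nil, Option.or_some, Option.some_or, Option.getD_none, Option.mem_def,
    Option.some.injEq, forall_eq', ne_eq, List.append_eq_nil_iff, reduceCtorEq, and_false,
    not_false_eq_true, huv, hu, hv]
  tauto

theorem IsAltPath.exists_matched_edge {x y w : α} {P : G.Walk x y} (hP : IsAltPath G s M P)
    (hw : w ∈ P.support) (hcov : w ∈ s ∨ w ≠ x ∧ w ≠ y) : ∃ e ∈ P.edges, e ∈ M ∧ w ∈ e := by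
  obtain ⟨-, hne, halt, hhead, hlast⟩ := isAltPath_iff.mp hP
  obtain ⟨p, q, rfl⟩ := Walk.mem_support_iff_exists_append.mp hw
  obtain ⟨p, rfl⟩ : ∃ p', p = p'.reverse := ⟨p.reverse, p.reverse_reverse.symm⟩
  match p, q with
  | .nil, .nil => simp at hne
  | .nil, .cons h q => simp_all
  | .cons h p, .nil => simp_all
  | .cons (v := a) h p, .cons (v := b) h' q =>
    have hturn : s(a, w) ∈ M ↔ s(w, b) ∉ M := by simp_all
    by_cases hb : s(w, b) ∈ M
    · exact ⟨s(w, b), by simp, hb, Sym2.mem_mk_left w b⟩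
    · exact ⟨s(a, w), by simp, hturn.mpr hb, Sym2.mem_mk_right a w⟩

theorem IsAltPath.mem_of_mem_support (hM : IsPMOn G s M) {x y w : α} {P : G.Walk x y}
    (hP : IsAltPath G s M P) (hw : w ∈ P.support) (hx : w ≠ x) (hy : w ≠ y) : w ∈ s := by
  obtain ⟨e, -, heM, hwe⟩ := hP.exists_matched_edge hw (.inr ⟨hx, hy⟩)
  exact hM.mem_of_mem heM hwe

theorem IsAltPath.disjoint_support (hM : IsPMOn G s M) {x u v y : α} {h : G.Adj u v}
    {p : G.Walk x u} {q : G.Walk v y} (hp : IsAltPath G s M (p.concat h))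
    (hq : IsAltPath G s M (.cons h q)) (huv : s(u, v) ∈ M) (hxy : x ≠ y)
    (hpq : MateDisjoint (mate M) (matchedStarts M p) (matchedStarts M q)) :
    p.support.Disjoint q.support := by
  intro w hwp hwq
  have hvp : v ∉ p.support := ((Walk.concat_isPath_iff _).mp hp.1).2
  have huq : u ∉ q.support := ((Walk.cons_isPath_iff _ _).mp hq.1).2
  have hwu : w ≠ u := by rintro rfl; exact huq hwq
  have hwv : w ≠ v := by rintro rfl; exact hvp hwp
  have hwp' : w ∈ (p.concat h).support := by simp [Walk.support_concat, hwp]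
  have hwq' : w ∈ (Walk.cons h q).support := by simp [hwq]
  have hne {e} (he : w ∈ e) : e ≠ s(u, v) := by
    rintro rfl
    exact (Sym2.mem_iff.mp he).elim hwu hwv
  have hws : w ∈ s := by
    obtain hwx | hwy : w ≠ x ∨ w ≠ y := by grind
    · exact hp.mem_of_mem_support hM hwp' hwx hwv
    · exact hq.mem_of_mem_support hM hwq' hwu hwy
  obtain ⟨e, hep, heM, hwe⟩ := hp.exists_matched_edge hwp' (.inl hws)
  obtain ⟨f, hfq, hfM, hwf⟩ := hq.exists_matched_edge hwq' (.inl hws)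
  have hep' : e ∈ p.edges := by simpa [hne hwe] using hep
  have hfq' : f ∈ q.edges := by simpa [hne hwf] using hfq
  exact mateDisjoint_iff_disjoint_map.mp hpq (hM.matePair_mem_map_matchedStarts hep' heM hwe)
    (hM.matePair_mem_map_matchedStarts hfq' hfM hwf)

end AltPath

section Repartition

open SimpleGraph

variable {α : Type*} {G : SimpleGraph α} {s : Finset α} {M : Finset (Sym2 α)}
  {p₁ p₂ p₃ p₄ : α}

/-- The multiset of edges `E` is the union of the edges of an alternating path from `a` to `b` and
of one from `c` to `d`. -/
def AltRepartition (G : SimpleGraph α) (s : Finset α) (M : Finset (Sym2 α))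
    (E : Multiset (Sym2 α)) (a b c d : α) : Prop :=
  ∃ (Q₁ : G.Walk a b) (Q₂ : G.Walk c d), IsAltPath G s M Q₁ ∧ IsAltPath G s M Q₂ ∧
    (Q₁.edges : Multiset (Sym2 α)) + (Q₂.edges : Multiset (Sym2 α)) = E

/-- The walks `P` and `P'` traverse a common edge of `M`, in the same direction, and the part of
either walk before this edge is vertex-disjoint from the part of the other walk after it. If `P` and
`P'` are paths, the edge is then a bridge of their union. -/
def ShareBridge (M : Finset (Sym2 α)) (P : G.Walk p₁ p₂) (P' : G.Walk p₃ p₄) : Prop :=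
  ∃ (u v : α) (h : G.Adj u v) (A : G.Walk p₁ u) (B : G.Walk v p₂) (C : G.Walk p₃ u)
    (D : G.Walk v p₄), s(u, v) ∈ M ∧ P = A.append (.cons h B) ∧ P' = C.append (.cons h D) ∧
      A.support.Disjoint D.support ∧ C.support.Disjoint B.support

theorem disjointPaths_of_disjoint_support {x₁ y₁ x₂ y₂ : α} {p : G.Walk x₁ y₁} {q : G.Walk x₂ y₂}
    (hpq : p.support.Disjoint q.support) : DisjointPaths G {x₁, x₂, y₁, y₂} x₁ y₁ x₂ y₂ := by
  classical
  have hp {u} (hu : u ∈ p.bypass.support) := p.support_bypass_subset_support hu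
  have hq {u} (hu : u ∈ q.bypass.support) := q.support_bypass_subset_support hu
  refine ⟨p.bypass, q.bypass, p.bypass_isPath, q.bypass_isPath,
    fun u hu hu' => hpq (hp hu) (hq hu'), ?_, ?_⟩
  · rintro u hu hx hy (rfl | rfl | rfl | rfl)
    exacts [hx rfl, hpq (hp hu) q.start_mem_support, hy rfl, hpq (hp hu) q.end_mem_support]
  · rintro u hu hx hy (rfl | rfl | rfl | rfl)
    exacts [hpq p.start_mem_support (hq hu), hx rfl, hpq p.end_mem_support (hq hu), hy rfl]

theorem exists_leaving_edge_ne {x y v : α} {p : G.Walk x y} {L : Set α} (hp : p.IsTrail)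
    (hx : x ∈ L) (hy : y ∈ L) (hv : v ∈ p.support) (hvL : v ∉ L) (e : Sym2 α) :
    ∃ a b, s(a, b) ∈ p.edges ∧ a ∈ L ∧ b ∉ L ∧ s(a, b) ≠ e := by
  obtain ⟨q, r, rfl⟩ := Walk.mem_support_iff_exists_append.mp hv
  obtain ⟨⟨⟨a, b⟩, hab⟩, habq, ha, hb⟩ := q.exists_boundary_dart L hx hvL
  obtain ⟨⟨⟨c, d⟩, hcd⟩, hcdr, hc, hd⟩ := r.reverse.exists_boundary_dart L hy hvL
  have habq' : s(a, b) ∈ q.edges := List.mem_map_of_mem habq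
  have hcdr' : s(c, d) ∈ r.edges := by
    rw [← List.mem_reverse, ← Walk.edges_reverse]
    exact List.mem_map_of_mem hcdr
  have hne : s(a, b) ≠ s(c, d) := fun heq =>
    (List.nodup_append'.mp (Walk.edges_append q r ▸ hp.edges_nodup)).2.2 habq' (heq ▸ hcdr')
  by_cases he : s(a, b) = e
  · exact ⟨c, d, by simp [hcdr'], hc, hd, he ▸ hne.symm⟩
  · exact ⟨a, b, by simp [habq'], ha, hb, he⟩

namespace ShareBridge

variable {P : G.Walk p₁ p₂} {P' : G.Walk p₃ p₄}

theorem altRepartition (h : ShareBridge M P P') (hM : IsPMOn G s M) (hP : IsAltPath G s M P)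
    (hP' : IsAltPath G s M P') :
    AltRepartition G s M (P.edges + P'.edges) p₁ p₄ p₂ p₃ := by
  obtain ⟨u, v, h, A, B, C, D, huv, rfl, rfl, hAD, hCB⟩ := h
  obtain ⟨hA, hB, -⟩ := (isAltPath_append_cons_iff hM huv).mp hP
  obtain ⟨hC, hD, -⟩ := (isAltPath_append_cons_iff hM huv).mp hP'
  refine ⟨A.append (.cons h D), (C.append (.cons h B)).reverse,
    (isAltPath_append_cons_iff hM huv).mpr ⟨hA, hD, hAD⟩,
    ((isAltPath_append_cons_iff hM huv).mpr ⟨hC, hB, hCB⟩).reverse, ?_⟩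
  simp only [Walk.edges_reverse, Multiset.coe_reverse, Walk.edges_append, Walk.edges_cons,
    ← Multiset.coe_add, ← Multiset.cons_coe, ← Multiset.singleton_add]
  abel

theorem disjointPaths (h : ShareBridge M P P') (hP : P.IsPath) (hP' : P'.IsPath) :
    DisjointPaths G {p₁, p₂, p₃, p₄} p₁ p₃ p₂ p₄ := by
  obtain ⟨u, v, h, A, B, C, D, -, rfl, rfl, hAD, hCB⟩ := h
  obtain ⟨-, -, hAB⟩ := isPath_append_cons_iff.mp hP
  obtain ⟨-, -, hCD⟩ := isPath_append_cons_iff.mp hP'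
  refine disjointPaths_of_disjoint_support (p := A.append C.reverse) (q := B.reverse.append D) ?_
  intro w
  simp only [Walk.mem_support_append_iff, Walk.support_reverse, List.mem_reverse]
  rintro (hA | hC) (hB | hD)
  exacts [hAB hA hB, hAD hA hD, hCB hC hB, hCD hC hD]

theorem not_altRepartition (h : ShareBridge M P P') (hP : P.IsPath) (hP' : P'.IsPath) :
    ¬ AltRepartition G s M (P.edges + P'.edges) p₁ p₃ p₂ p₄ := by
  classical
  rintro ⟨Q₁, Q₂, hQ₁, hQ₂, hQ⟩
  obtain ⟨u, v, h, A, B, C, D, -, rfl, rfl, hAD, hCB⟩ := h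
  obtain ⟨-, -, hAB⟩ := isPath_append_cons_iff.mp hP
  obtain ⟨-, -, hCD⟩ := isPath_append_cons_iff.mp hP'
  have hedges {e} (he : e ∈ Q₁.edges) :
      e = s(u, v) ∨ e ∈ A.edges ∨ e ∈ B.edges ∨ e ∈ C.edges ∨ e ∈ D.edges := by
    have hE := hQ ▸ Multiset.mem_add.mpr (.inl (Multiset.mem_coe.mpr he))
    simp only [Walk.edges_append, Walk.edges_cons, Multiset.mem_add, Multiset.mem_coe,
      List.mem_append, List.mem_cons] at hE
    tauto
  have huv : s(u, v) ∈ Q₁.edges := by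
    have hcount := congrArg (Multiset.count s(u, v)) hQ
    have hle := List.nodup_iff_count_le_one.mp hQ₂.1.isTrail.edges_nodup s(u, v)
    simp only [Multiset.count_add, Multiset.coe_count, Walk.edges_append, Walk.edges_cons,
      List.count_append, List.count_cons_self] at hcount
    exact List.count_pos_iff.mp (by omega)
  have hv : v ∉ {w | w ∈ A.support ∨ w ∈ C.support} :=
    fun hv => hv.elim (hAB · B.start_mem_support) (hCD · D.start_mem_support)
  obtain ⟨a, b, hab, ha, hb, hne⟩ := exists_leaving_edge_ne hQ₁.1.isTrail
    (.inl A.start_mem_support) (.inr C.start_mem_support) (Q₁.snd_mem_support_of_mem_edges huv) hv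
    s(u, v)
  obtain h | h | h | h | h := hedges hab
  · exact hne h
  · exact hb (.inl (A.snd_mem_support_of_mem_edges h))
  · have := B.fst_mem_support_of_mem_edges h
    exact ha.elim (hAB · this) (hCB · this)
  · exact hb (.inr (C.snd_mem_support_of_mem_edges h))
  · have := D.fst_mem_support_of_mem_edges h
    exact ha.elim (hAD · this) (hCD · this)

end ShareBridge

theorem IsPMOn.shareBridge_of_hasCut (hM : IsPMOn G s M) {P : G.Walk p₁ p₂} {P' : G.Walk p₃ p₄}
    (hP : IsAltPath G s M P) (hP' : IsAltPath G s M P') (h₁₄ : p₁ ≠ p₄) (h₃₂ : p₃ ≠ p₂)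
    (hcut : HasCut (mate M) (matchedStarts M P) (matchedStarts M P')) : ShareBridge M P P' := by
  obtain ⟨X, u, Y, Z, W, hXY, hZW, hXW, hZY⟩ := hcut
  obtain ⟨v, h, A, B, huv, rfl, rfl, rfl⟩ := matchedStarts_eq_append_cons hXY
  obtain ⟨v', h', C, D, huv', rfl, rfl, rfl⟩ := matchedStarts_eq_append_cons hZW
  obtain rfl : v = v' := (hM.mate_eq huv).symm.trans (hM.mate_eq huv')
  obtain ⟨hA, hB, -⟩ := (isAltPath_append_cons_iff hM huv).mp hP
  obtain ⟨hC, hD, -⟩ := (isAltPath_append_cons_iff hM huv).mp hP'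
  exact ⟨u, v, h, A, B, C, D, huv, rfl, rfl, hA.disjoint_support hM hD huv h₁₄ hXW,
    hC.disjoint_support hM hB huv h₃₂ hZY⟩

theorem IsPMOn.shareBridge_or_shareBridge_reverse (hM : IsPMOn G s M)
    (huniq : ∀ m, IsPMOn G s m → m = M) (hdist : [p₁, p₂, p₃, p₄].Nodup)
    {P : G.Walk p₁ p₂} {P' : G.Walk p₃ p₄} (hP : IsAltPath G s M P) (hP' : IsAltPath G s M P')
    (hshare : ∃ w, w ∈ P.support ∧ w ∈ P'.support) :
    ShareBridge M P P' ∨ ShareBridge M P P'.reverse := by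
  obtain ⟨w, hw, hw'⟩ := hshare
  have hws : w ∈ s := by
    obtain ⟨h, h'⟩ | ⟨h, h'⟩ : (w ≠ p₁ ∧ w ≠ p₂) ∨ (w ≠ p₃ ∧ w ≠ p₄) := by grind
    · exact hP.mem_of_mem_support hM hw h h'
    · exact hP'.mem_of_mem_support hM hw' h h'
  have hmeet : ¬ MateDisjoint (mate M) (matchedStarts M P) (matchedStarts M P') := by
    obtain ⟨e, he, heM, hwe⟩ := hP.exists_matched_edge hw (.inl hws)
    obtain ⟨f, hf, hfM, hwf⟩ := hP'.exists_matched_edge hw' (.inl hws)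
    exact fun hdisj => mateDisjoint_iff_disjoint_map.mp hdisj
      (hM.matePair_mem_map_matchedStarts he heM hwe) (hM.matePair_mem_map_matchedStarts hf hfM hwf)
  have hcut := (hM.isAcyclicSkew huniq).hasCut_or_hasCut_mateReverse
    (hM.isChain_altStep_matchedStarts hP.1 hP.2.2.1)
    (hM.isChain_altStep_matchedStarts hP'.1 hP'.2.2.1)
    (hM.mateNodup_matchedStarts hP.1.isTrail) (hM.mateNodup_matchedStarts hP'.1.isTrail) hmeet
  rw [← hM.matchedStarts_reverse] at hcut
  exact hcut.imp (hM.shareBridge_of_hasCut hP hP' (by grind) (by grind))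
    (hM.shareBridge_of_hasCut hP hP'.reverse (by grind) (by grind))

theorem alt_path_repartition_general (hM : IsPMOn G s M) (huniq : ∀ m, IsPMOn G s m → m = M)
    (hdist : [p₁, p₂, p₃, p₄].Nodup) {P : G.Walk p₁ p₂} {P' : G.Walk p₃ p₄}
    (hP : IsAltPath G s M P) (hP' : IsAltPath G s M P')
    (hshare : ∃ w, w ∈ P.support ∧ w ∈ P'.support) :
    Xor (AltRepartition G s M (P.edges + P'.edges) p₁ p₃ p₂ p₄)
        (AltRepartition G s M (P.edges + P'.edges) p₁ p₄ p₂ p₃) ∧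
      (¬ DisjointPaths G {p₁, p₂, p₃, p₄} p₁ p₃ p₂ p₄ →
        AltRepartition G s M (P.edges + P'.edges) p₁ p₃ p₂ p₄) := by
  obtain h | h := hM.shareBridge_or_shareBridge_reverse huniq hdist hP hP' hshare
  · exact ⟨.inr ⟨h.altRepartition hM hP hP', h.not_altRepartition hP.1 hP'.1⟩,
      fun hdisj => absurd (h.disjointPaths hP.1 hP'.1) hdisj⟩
  · have hrep := h.altRepartition hM hP hP'.reverse
    have hnot := h.not_altRepartition (s := s) hP.1 hP'.reverse.1
    rw [Walk.edges_reverse, Multiset.coe_reverse] at hrep hnot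
    exact ⟨.inl ⟨hrep, hnot⟩, fun _ => hrep⟩

end Repartition

/-- (Proposition 3.4.) The multiset union `Q` of the edges of two
intersecting `MH`-alternating paths, from `p₁` to `p₂` and from `p₃` to `p₄`, can be
re-partitioned into two `MH`-alternating paths joining `p₁,p₃` and `p₂,p₄`, or into two
joining `p₁,p₄` and `p₂,p₃`, but not both; and if there are no two vertex-disjoint paths
joining `p₁` to `p₃` and `p₂` to `p₄` with internal vertices avoiding `{p₁,p₂,p₃,p₄}`,
then the first alternative holds. -/
theorem alt_path_repartition {α : Type*} [Fintype α] [DecidableEq α]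
    (G : SimpleGraph α) (sH : Finset α) (MH : Finset (Sym2 α))
    (hMH : IsPMOn G sH MH) (huniq : ∀ m, IsPMOn G sH m → m = MH)
    (p₁ p₂ p₃ p₄ : α) (hdist : ([p₁, p₂, p₃, p₄] : List α).Nodup)
    (P : G.Walk p₁ p₂) (P' : G.Walk p₃ p₄)
    (hP : IsAltPath G sH MH P) (hP' : IsAltPath G sH MH P')
    (hshare : ∃ w, w ∈ P.support ∧ w ∈ P'.support) :
    (Xor'
      (∃ (Q₁ : G.Walk p₁ p₃) (Q₂ : G.Walk p₂ p₄),
        IsAltPath G sH MH Q₁ ∧ IsAltPath G sH MH Q₂ ∧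
        (Q₁.edges : Multiset (Sym2 α)) + (Q₂.edges : Multiset (Sym2 α)) =
          (P.edges : Multiset (Sym2 α)) + (P'.edges : Multiset (Sym2 α)))
      (∃ (Q₁ : G.Walk p₁ p₄) (Q₂ : G.Walk p₂ p₃),
        IsAltPath G sH MH Q₁ ∧ IsAltPath G sH MH Q₂ ∧
        (Q₁.edges : Multiset (Sym2 α)) + (Q₂.edges : Multiset (Sym2 α)) =
          (P.edges : Multiset (Sym2 α)) + (P'.edges : Multiset (Sym2 α)))) ∧
    (¬ DisjointPaths G {p₁, p₂, p₃, p₄} p₁ p₃ p₂ p₄ →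
      ∃ (Q₁ : G.Walk p₁ p₃) (Q₂ : G.Walk p₂ p₄),
        IsAltPath G sH MH Q₁ ∧ IsAltPath G sH MH Q₂ ∧
        (Q₁.edges : Multiset (Sym2 α)) + (Q₂.edges : Multiset (Sym2 α)) =
          (P.edges : Multiset (Sym2 α)) + (P'.edges : Multiset (Sym2 α))) :=
  alt_path_repartition_general hMH huniq hdist hP hP' hshare
end

section
/- Let n be even and let F be a partition of {1,…,n} into pairs that contains two pairs {i,j} and {k,ℓ} with i < j < k < ℓ. Let F' be the partition obtained from F by replacing {i,j} and {k,ℓ} with {i,k} and {j,ℓ}. Then (−1)^{χ(F)} = −(−1)^{χ(F')}, i.e., the crossing numbers χ(F) and χ(F') have opposite parity. -/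
/-!
Let `R` consist of the pairs of `F` other than `{i, j}` and `{k, ℓ}`. A pair `{a, b}` crosses a
disjoint pair `q` iff exactly one of `a`, `b` lies strictly between the elements of `q`. Hence,
modulo 2, the crossings of two pairs on `{i, j, k, ℓ}` with `R` are counted by a sum over
`i, j, k, ℓ` which does not depend on how these four points are paired up, and only the mutual
crossing of the two pairs matters: `{i, j}` and `{k, ℓ}` do not cross, `{i, k}` and `{j, ℓ}` do.
-/

lemma natCast_card_filter_xor {ι : Type*} (s : Finset ι) (P Q : ι → Prop) [DecidablePred P]
    [DecidablePred Q] :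
    ((s.filter fun x => Xor (P x) (Q x)).card : ZMod 2) =
      (s.filter P).card + (s.filter Q).card := by
  simp only [Finset.natCast_card_filter, ← Finset.sum_add_distrib]
  refine Finset.sum_congr rfl fun x _ => ?_
  by_cases hP : P x <;> by_cases hQ : Q x <;> simp [hP, hQ, CharTwo.add_self_eq_zero]

lemma neg_one_pow_eq_neg_of_natCast_eq_add_one {A : Type*} [Ring A] {m n : ℕ}
    (h : (m : ZMod 2) = n + 1) : (-1 : A) ^ m = -(-1) ^ n := by
  have hmod : m % 2 = (n + 1) % 2 := (ZMod.natCast_eq_natCast_iff' _ _ _).1 (by exact_mod_cast h)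
  rw [neg_one_pow_eq_pow_mod_two, hmod, ← neg_one_pow_eq_pow_mod_two, pow_succ, mul_neg_one]

/-- The point `x` is an endpoint of no pair in `R`. -/
def Uncovered {α : Type*} (R : Finset (α × α)) (x : α) : Prop :=
  ∀ q ∈ R, x ≠ q.1 ∧ x ≠ q.2

lemma Uncovered.mk_notMem {α : Type*} {R : Finset (α × α)} {a b : α} (ha : Uncovered R a) :
    (a, b) ∉ R :=
  fun hab => (ha _ hab).1 rfl

lemma IsOneFactor.uncovered_sdiff {n : ℕ} {F S : Finset (Fin n × Fin n)} (hF : IsOneFactor n F)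
    {p : Fin n × Fin n} (hpF : p ∈ F) (hpS : p ∈ S) {v : Fin n} (hv : v = p.1 ∨ v = p.2) :
    Uncovered (F \ S) v := by
  intro q hq
  obtain ⟨hqF, hqS⟩ := Finset.mem_sdiff.1 hq
  refine not_or.1 fun hvq => hqS ?_
  rwa [(hF.2 v).unique ⟨hqF, hvq⟩ ⟨hpF, hv⟩]

section Crossings

variable {α : Type*} [LinearOrder α] {R : Finset (α × α)} {p q : α × α} {a b c d : α}

/-- The pair `q` crosses the pair `p` to the right: `q` starts strictly inside `p` and ends after
it. This is the condition counted by `crossingNumber`. -/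
abbrev CrossesRight (p q : α × α) : Prop :=
  p.1 < q.1 ∧ q.1 < p.2 ∧ p.2 < q.2

/-- The symmetric crossing relation between pairs of points of a linear order. -/
abbrev Crosses (p q : α × α) : Prop :=
  CrossesRight p q ∨ CrossesRight q p

/-- The number of crossings in a finite set of pairs; on `Fin n` it is definitionally
`crossingNumber n`. -/
def crossingCount (F : Finset (α × α)) : ℕ :=
  ((F ×ˢ F).filter fun x => CrossesRight x.1 x.2).card

/-- The number of pairs in `R` that cross `p`. -/
def crossingCountWith (R : Finset (α × α)) (p : α × α) : ℕ :=
  (R.filter fun q => Crosses p q).card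

/-- The number of pairs in `R` strictly enclosing the point `x`. -/
def nestingDepth (R : Finset (α × α)) (x : α) : ℕ :=
  (R.filter fun q => x ∈ Set.Ioo q.1 q.2).card

lemma crosses_iff_xor_mem_Ioo (hab : a ≤ b) (ha : a ≠ q.1 ∧ a ≠ q.2) (hb : b ≠ q.1 ∧ b ≠ q.2) :
    Crosses (a, b) q ↔ Xor (a ∈ Set.Ioo q.1 q.2) (b ∈ Set.Ioo q.1 q.2) := by
  simp only [Crosses, CrossesRight, Set.mem_Ioo, Xor]
  grind

lemma natCast_crossingCountWith (hab : a ≤ b) (ha : Uncovered R a) (hb : Uncovered R b) :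
    (crossingCountWith R (a, b) : ZMod 2) = nestingDepth R a + nestingDepth R b := by
  have hxor : crossingCountWith R (a, b) =
      (R.filter fun q => Xor (a ∈ Set.Ioo q.1 q.2) (b ∈ Set.Ioo q.1 q.2)).card :=
    congrArg Finset.card <| Finset.filter_congr fun q hq =>
      crosses_iff_xor_mem_Ioo hab (ha q hq) (hb q hq)
  rw [hxor, natCast_card_filter_xor, nestingDepth, nestingDepth]

lemma crossingCountWith_eq_sum (R : Finset (α × α)) (p : α × α) :
    crossingCountWith R p =
      ∑ q ∈ R, ((if CrossesRight p q then 1 else 0) + if CrossesRight q p then 1 else 0) := by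
  rw [crossingCountWith, Finset.card_filter]
  refine Finset.sum_congr rfl fun q _ => ?_
  by_cases hpq : CrossesRight p q
  · have hqp : ¬CrossesRight q p := fun hqp => hpq.1.asymm hqp.1
    rw [if_pos (Or.inl hpq), if_pos hpq, if_neg hqp]
  · simp only [Crosses, hpq, false_or, if_false, zero_add]

lemma crossingCountWith_insert (hq : q ∉ R) :
    crossingCountWith (insert q R) p = (if Crosses p q then 1 else 0) + crossingCountWith R p := by
  simp only [crossingCountWith, Finset.card_filter, Finset.sum_insert hq]

lemma crossingCount_insert (hp : p ∉ R) :
    crossingCount (insert p R) = crossingCount R + crossingCountWith R p := by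
  have not_self : ¬CrossesRight p p := fun h => h.1.false
  simp only [crossingCount, crossingCountWith_eq_sum, Finset.card_filter, Finset.sum_product,
    Finset.sum_insert hp, Finset.sum_add_distrib, if_neg not_self]
  ring

lemma natCast_crossingCount_insert_insert (hab : a ≤ b) (hcd : c ≤ d) (hac : a ≠ c)
    (ha : Uncovered R a) (hb : Uncovered R b) (hc : Uncovered R c) (hd : Uncovered R d) :
    (crossingCount (insert (a, b) (insert (c, d) R)) : ZMod 2) =
      crossingCount R + (nestingDepth R a + nestingDepth R b + nestingDepth R c + nestingDepth R d)
        + if Crosses (a, b) (c, d) then 1 else 0 := by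
  have hab_notMem : (a, b) ∉ insert (c, d) R := by
    simp [ha.mk_notMem, hac]
  rw [crossingCount_insert hab_notMem, crossingCount_insert hc.mk_notMem,
    crossingCountWith_insert hc.mk_notMem]
  push_cast
  rw [natCast_crossingCountWith hab ha hb, natCast_crossingCountWith hcd hc hd]
  ring

theorem crossingNumber_parity_swap_general {F : Finset (α × α)} {i j k l : α}
    (hij : i < j) (hjk : j < k) (hkl : k < l) (hmem₁ : (i, j) ∈ F) (hmem₂ : (k, l) ∈ F)
    (hi : Uncovered (F \ {(i, j), (k, l)}) i) (hj : Uncovered (F \ {(i, j), (k, l)}) j)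
    (hk : Uncovered (F \ {(i, j), (k, l)}) k) (hl : Uncovered (F \ {(i, j), (k, l)}) l) :
    (-1 : ℤ) ^ crossingCount F =
      -(-1 : ℤ) ^ crossingCount ((F \ {(i, j), (k, l)}) ∪ {(i, k), (j, l)}) := by
  set R := F \ {(i, j), (k, l)}
  have hF : F = insert (i, j) (insert (k, l) R) := by
    grind
  have hF' : R ∪ {(i, k), (j, l)} = insert (i, k) (insert (j, l) R) := by
    grind
  have not_crosses : ¬Crosses (i, j) (k, l) := by
    rintro (⟨-, hkj, -⟩ | ⟨hki, -, -⟩)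
    · exact hjk.asymm hkj
    · exact (hij.trans hjk).asymm hki
  have crosses : Crosses (i, k) (j, l) := Or.inl ⟨hij, hjk, hkl⟩
  apply neg_one_pow_eq_neg_of_natCast_eq_add_one
  rw [hF', hF,
    natCast_crossingCount_insert_insert hij.le hkl.le (hij.trans hjk).ne hi hj hk hl,
    natCast_crossingCount_insert_insert (hij.trans hjk).le (hjk.trans hkl).le hij.ne hi hk hj hl,
    if_neg not_crosses, if_pos crosses, add_assoc _ (1 : ZMod 2) 1, CharTwo.add_self_eq_zero]
  ring

end Crossings

/-- Replacing pairs `{i,j}, {k,l}` (with `i<j<k<l`) of a 1-factor by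
`{i,k}, {j,l}` changes the parity of the crossing number. -/
theorem crossingNumber_parity_swap (n : ℕ) (hn : Even n)
    (F : Finset (Fin n × Fin n)) (hF : IsOneFactor n F)
    (i j k l : Fin n) (hij : i < j) (hjk : j < k) (hkl : k < l)
    (hmem₁ : (i, j) ∈ F) (hmem₂ : (k, l) ∈ F) :
    (-1 : ℤ) ^ crossingNumber n F =
      -(-1 : ℤ) ^ crossingNumber n ((F \ {(i, j), (k, l)}) ∪ {(i, k), (j, l)}) :=
  crossingNumber_parity_swap_general hij hjk hkl hmem₁ hmem₂
    (hF.uncovered_sdiff hmem₁ (by simp) (.inl rfl)) (hF.uncovered_sdiff hmem₁ (by simp) (.inr rfl))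
    (hF.uncovered_sdiff hmem₂ (by simp) (.inl rfl)) (hF.uncovered_sdiff hmem₂ (by simp) (.inr rfl))
end

section
/- Let G be a finite simple graph, let n be even, and let A = {a_1,…,a_n} be distinct vertices such that G is noncrossing with respect to the cyclic sequence (a_1,…,a_n). Partition A into disjoint subsets A_K and A_H, let H = G−A_K, and for 1 ≤ i < j ≤ n let H_{ij} be the induced subgraph of G on the symmetric difference of V(H) and {a_i,a_j}. If H has exactly one perfect matching, then M(G−A_H) = Σ_F (−1)^{χ(F)} Π_{{i,j}∈F, i<j} M(H_{ij}), the sum over all partitions F of {1,…,n} into pairs (i.e., M(G−A_H) equals the Pfaffian Pf(M(H_{ij}))_{1≤i<j≤n}). -/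
/-!
Superimpose a perfect matching of `G[s]` on one of `G[s ∆ A]`: the components that meet `A` are
alternating paths which join the vertices of `A` in pairs. Exchanging the two matchings along the
path ending at `a i` moves both vertex sets by `{a i, a j}`, where `a j` is the other end. Because
`G` is noncrossing, these paths cannot separate one another, so the number of vertices of `A`
strictly between `a i` and `a j` is even and `i`, `j` have opposite parity. The exchange is thus a
sign-reversing involution, which gives the linear relation

  `∑ i, (-1) ^ i * M (K ∆ {a i}) * M (K ∆ {a i} ∆ A) = 0`.

For `K = H ∆ {a 1}` it expresses `M H * M (H ∆ A)` by the recursion satisfied by the Pfaffian of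
the numbers `M (H ∆ {a i, a j})` under expansion along its first row. Induction on `|A| = 2k` gives
`M H ^ k * M (H ∆ A) = M H * Pf`, and `M H = 1` in the theorem.
-/

open scoped symmDiff

/-! ### Perfect matchings as involutions -/

/-- A perfect matching of the induced subgraph of `G` on `s`, encoded as the involution that
exchanges the two ends of each matching edge and fixes the vertices outside `s`. -/
structure IsMatchingInvolution {α : Type*} (G : SimpleGraph α) (s : Finset α) (σ : α → α) :
    Prop where
  involutive : Function.Involutive σ
  adj : ∀ v ∈ s, G.Adj v (σ v)
  apply_of_notMem : ∀ v ∉ s, σ v = v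

section MatchingInvolution

variable {α : Type*} {G : SimpleGraph α} {s t : Finset α} {σ τ : α → α}

namespace IsMatchingInvolution

lemma apply_eq_self_iff (h : IsMatchingInvolution G s σ) {v : α} : σ v = v ↔ v ∉ s :=
  ⟨fun hv hs ↦ (h.adj v hs).ne hv.symm, h.apply_of_notMem v⟩

lemma apply_mem_iff (h : IsMatchingInvolution G s σ) {v : α} : σ v ∈ s ↔ v ∈ s := by
  rw [← not_iff_not, ← h.apply_eq_self_iff, ← h.apply_eq_self_iff, h.involutive v, eq_comm]

lemma apply_mem_of_subset (h : IsMatchingInvolution G s σ) (hst : s ⊆ t) {v : α} (hv : v ∈ t) :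
    σ v ∈ t := by
  by_cases hvs : v ∈ s
  · exact hst (h.apply_mem_iff.2 hvs)
  · rwa [h.apply_of_notMem v hvs]

lemma adj_of_ne (h : IsMatchingInvolution G s σ) {v : α} (hv : v ≠ σ v) : G.Adj v (σ v) :=
  h.adj v (not_not.1 (mt h.apply_eq_self_iff.2 hv.symm))

lemma isPMOn_image [DecidableEq α] (h : IsMatchingInvolution G s σ) :
    IsPMOn G s (s.image fun v ↦ s(v, σ v)) := by
  refine ⟨Finset.forall_mem_image.2 fun v hv ↦ ⟨h.adj v hv, fun u hu ↦ ?_⟩, fun v hv ↦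
    ⟨s(v, σ v), ⟨Finset.mem_image_of_mem _ hv, Sym2.mem_mk_left _ _⟩, ?_⟩⟩
  · rcases Sym2.mem_iff.1 hu with rfl | rfl
    exacts [hv, h.apply_mem_iff.2 hv]
  · rintro e ⟨he, hve⟩
    obtain ⟨u, -, rfl⟩ := Finset.mem_image.1 he
    rcases Sym2.mem_iff.1 hve with rfl | rfl
    · rfl
    · rw [h.involutive u, Sym2.eq_swap]

lemma eq_of_image_eq [DecidableEq α] (hσ : IsMatchingInvolution G s σ)
    (hτ : IsMatchingInvolution G s τ)
    (h : (s.image fun v ↦ s(v, σ v)) = s.image fun v ↦ s(v, τ v)) : σ = τ := by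
  funext v
  by_cases hv : v ∈ s
  · have hσv : s(v, σ v) ∈ s.image fun v ↦ s(v, τ v) := h ▸ Finset.mem_image_of_mem _ hv
    exact Sym2.congr_right.1 <| (hτ.isPMOn_image.2 v hv).unique
      ⟨hσv, Sym2.mem_mk_left _ _⟩ ⟨Finset.mem_image_of_mem _ hv, Sym2.mem_mk_left _ _⟩
  · rw [hσ.apply_of_notMem v hv, hτ.apply_of_notMem v hv]

end IsMatchingInvolution

namespace IsPMOn

variable {m : Finset (Sym2 α)}

lemma eq_of_mem (hm : IsPMOn G s m) {u v w : α} (hv : s(u, v) ∈ m) (hw : s(u, w) ∈ m) : v = w :=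
  Sym2.congr_right.1 <| (hm.2 u ((hm.1 _ hv).2 u (Sym2.mem_mk_left _ _))).unique
    ⟨hv, Sym2.mem_mk_left _ _⟩ ⟨hw, Sym2.mem_mk_left _ _⟩

lemma exists_isMatchingInvolution [DecidableEq α] (hm : IsPMOn G s m) :
    ∃ σ, IsMatchingInvolution G s σ ∧ (s.image fun v ↦ s(v, σ v)) = m := by
  have hex (v : α) : ∃ u, (v ∈ s → s(v, u) ∈ m) ∧ (v ∉ s → u = v) := by
    by_cases hv : v ∈ s
    · obtain ⟨_, ⟨hu, u, rfl⟩, -⟩ := hm.2 v hv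
      exact ⟨u, fun _ ↦ hu, fun h ↦ absurd hv h⟩
    · exact ⟨v, fun h ↦ absurd h hv, fun _ ↦ rfl⟩
  choose σ hσm hσs using hex
  have hinv : Function.Involutive σ := fun v ↦ by
    by_cases hv : v ∈ s
    · have hσv : σ v ∈ s := (hm.1 _ (hσm v hv)).2 _ (Sym2.mem_mk_right _ _)
      exact hm.eq_of_mem (hσm _ hσv) (Sym2.eq_swap ▸ hσm v hv)
    · rw [hσs v hv, hσs v hv]
  refine ⟨σ, ⟨hinv, fun v hv ↦ (hm.1 _ (hσm v hv)).1, hσs⟩, Finset.Subset.antisymm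
    (Finset.image_subset_iff.2 hσm) fun e he ↦ ?_⟩
  induction e with
  | _ u v =>
    have hu : u ∈ s := (hm.1 _ he).2 u (Sym2.mem_mk_left _ _)
    exact Finset.mem_image.2 ⟨u, hu, by rw [hm.eq_of_mem (hσm u hu) he]⟩

end IsPMOn

variable (G s)

lemma finite_setOf_isPMOn : {m | IsPMOn G s m}.Finite :=
  s.sym2.powerset.finite_toSet.subset fun _ hm ↦
    Finset.mem_powerset.2 fun e he ↦ Finset.mem_sym2_iff.2 (hm.1 e he).2

lemma bijOn_image_isMatchingInvolution [DecidableEq α] :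
    Set.BijOn (fun σ ↦ s.image fun v ↦ s(v, σ v)) {σ | IsMatchingInvolution G s σ}
      {m | IsPMOn G s m} :=
  ⟨fun _ h ↦ h.isPMOn_image, fun _ hσ _ hτ h ↦ hσ.eq_of_image_eq hτ h,
    fun _ hm ↦ hm.exists_isMatchingInvolution⟩

lemma finite_setOf_isMatchingInvolution : {σ | IsMatchingInvolution G s σ}.Finite := by
  classical
  exact (bijOn_image_isMatchingInvolution G s).finite_iff_finite.2 (finite_setOf_isPMOn G s)

/-- The perfect matchings of the induced subgraph of `G` on `s`, as involutions. -/
noncomputable def matchingInvolutions : Finset (α → α) :=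
  (finite_setOf_isMatchingInvolution G s).toFinset

lemma card_matchingInvolutions : (matchingInvolutions G s).card = pmCount G s := by
  classical
  rw [matchingInvolutions,
    ← Set.ncard_eq_toFinset_card _ (finite_setOf_isMatchingInvolution G s)]
  exact Nat.card_congr (bijOn_image_isMatchingInvolution G s).equiv

variable {G s}

@[simp]
lemma mem_matchingInvolutions : σ ∈ matchingInvolutions G s ↔ IsMatchingInvolution G s σ := by
  simp [matchingInvolutions]

lemma pmCount_eq_one_of_existsUnique (h : ∃! m, IsPMOn G s m) : pmCount G s = 1 := by
  obtain ⟨m, hm, hunique⟩ := h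
  exact Nat.card_eq_one_iff_unique.2
    ⟨⟨fun x y ↦ Subtype.ext ((hunique _ x.2).trans (hunique _ y.2).symm)⟩, ⟨⟨m, hm⟩⟩⟩

end MatchingInvolution

/-! ### Superposition of two matchings -/

/-- The superposition of two involutions: each vertex is joined to its two images. When the
involutions encode matchings, the components are alternating paths and cycles. -/
def superposition {α : Type*} (σ τ : α → α) : SimpleGraph α :=
  SimpleGraph.fromRel fun u v ↦ σ u = v ∨ τ u = v

section Superposition

variable {α : Type*} {σ τ : α → α}

lemma superposition_comm (σ τ : α → α) : superposition σ τ = superposition τ σ := by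
  simp only [superposition, or_comm]

lemma superposition_adj_iff (hσ : Function.Involutive σ) (hτ : Function.Involutive τ) {u v : α} :
    (superposition σ τ).Adj u v ↔ u ≠ v ∧ (σ u = v ∨ τ u = v) := by
  rw [superposition, SimpleGraph.fromRel_adj, hσ.eq_iff (x := v), hτ.eq_iff (x := v),
    eq_comm (a := v), eq_comm (a := v), or_self]

lemma reachable_superposition_left (σ τ : α → α) (v : α) :
    (superposition σ τ).Reachable v (σ v) := by
  by_cases h : v = σ v
  · rw [← h]
  · exact SimpleGraph.Adj.reachable <| (SimpleGraph.fromRel_adj _ _ _).2 ⟨h, .inl (.inl rfl)⟩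

lemma reachable_superposition_left_iff (σ τ : α → α) {u v : α} :
    (superposition σ τ).Reachable u (σ v) ↔ (superposition σ τ).Reachable u v :=
  ⟨fun h ↦ h.trans (reachable_superposition_left σ τ v).symm,
    fun h ↦ h.trans (reachable_superposition_left σ τ v)⟩

lemma reachable_superposition_right_iff (σ τ : α → α) {u v : α} :
    (superposition σ τ).Reachable u (τ v) ↔ (superposition σ τ).Reachable u v :=
  superposition_comm τ σ ▸ reachable_superposition_left_iff τ σ

lemma superposition_reachable_induction (hσ : Function.Involutive σ)
    (hτ : Function.Involutive τ) {P : α → Prop} (hPσ : ∀ v, P v → P (σ v))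
    (hPτ : ∀ v, P v → P (τ v)) {u v : α} (h : (superposition σ τ).Reachable u v) (hu : P u) :
    P v := by
  obtain ⟨w⟩ := h
  induction w with
  | nil => exact hu
  | cons hadj _ ih =>
    obtain ⟨-, rfl | rfl⟩ := (superposition_adj_iff hσ hτ).1 hadj
    exacts [ih (hPσ _ hu), ih (hPτ _ hu)]

lemma IsMatchingInvolution.superposition_le {G : SimpleGraph α} {s t : Finset α}
    (hσ : IsMatchingInvolution G s σ) (hτ : IsMatchingInvolution G t τ) :
    superposition σ τ ≤ G := by
  intro u v h
  obtain ⟨hne, rfl | rfl⟩ := (superposition_adj_iff hσ.involutive hτ.involutive).1 h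
  exacts [hσ.adj_of_ne hne, hτ.adj_of_ne hne]

/-! ### Ends of the components of a superposition -/

lemma mem_periodicPts_of_mapsTo_finite {f : α → α} {S : Set α} (hS : S.Finite)
    (hf : Set.MapsTo f S S) (hinj : Function.Injective f) {x : α} (hx : x ∈ S) :
    x ∈ Function.periodicPts f := by
  have := hS.to_subtype
  have hrestrict : Function.Injective (hf.restrict f S S) := hf.restrict_inj.2 hinj.injOn
  obtain ⟨n, hn, hper⟩ := Function.mem_periodicPts.1 (hrestrict.mem_periodicPts ⟨x, hx⟩)
  refine Function.mk_mem_periodicPts hn ?_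
  rw [Function.IsPeriodicPt, Function.IsFixedPt, ← hf.coe_iterate_restrict ⟨x, hx⟩ n, hper.eq]

lemma iterate_comp_apply_iterate_comp (hσ : Function.Involutive σ) (hτ : Function.Involutive τ)
    (k : ℕ) (v : α) : (τ ∘ σ)^[k] (τ ((τ ∘ σ)^[k] v)) = τ v := by
  induction k with
  | zero => rfl
  | succ k ih =>
    rw [Function.iterate_succ_apply, Function.iterate_succ_apply', Function.comp_apply,
      Function.comp_apply, hτ, hσ, ih]

section FixedStart

variable {x : α} (hσ : Function.Involutive σ) (hτ : Function.Involutive τ) (hx : τ x = x)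
include hσ hτ hx

/-- The composition `τ ∘ σ` moves two steps along the component of `x`; since the walk is
reflected at `x`, both involutions reverse the cyclic order of the orbit. -/
lemma right_apply_iterate_comp {m k : ℕ} (hm : (τ ∘ σ)^[m] x = x) (hk : k ≤ m) :
    τ ((τ ∘ σ)^[k] x) = (τ ∘ σ)^[m - k] x := by
  apply (hτ.injective.comp hσ.injective).iterate k
  rw [iterate_comp_apply_iterate_comp hσ hτ, ← Function.iterate_add_apply, hx,
    Nat.add_sub_cancel' hk, hm]

lemma left_apply_iterate_comp {m k : ℕ} (hm : (τ ∘ σ)^[m] x = x) (hk : k < m) :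
    σ ((τ ∘ σ)^[k] x) = (τ ∘ σ)^[m - (k + 1)] x := by
  rw [← right_apply_iterate_comp hσ hτ hx hm hk, Function.iterate_succ_apply',
    Function.comp_apply, hτ]

lemma reachable_superposition_iff_exists_iterate {m : ℕ} (hm : (τ ∘ σ)^[m] x = x) (hpos : 0 < m)
    {v : α} : (superposition σ τ).Reachable x v ↔ ∃ k < m, (τ ∘ σ)^[k] x = v := by
  constructor
  · intro h
    refine superposition_reachable_induction hσ hτ (P := fun v ↦ ∃ k < m, (τ ∘ σ)^[k] x = v)
      ?_ ?_ h ⟨0, hpos, rfl⟩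
    · rintro _ ⟨k, hk, rfl⟩
      exact ⟨m - (k + 1), by omega, (left_apply_iterate_comp hσ hτ hx hm hk).symm⟩
    · rintro _ ⟨k, hk, rfl⟩
      rcases Nat.eq_zero_or_pos k with rfl | hk0
      · exact ⟨0, hpos, hx.symm⟩
      · exact ⟨m - k, by omega, (right_apply_iterate_comp hσ hτ hx hm hk.le).symm⟩
  · rintro ⟨k, -, rfl⟩
    induction k with
    | zero => rfl
    | succ k ih =>
      rwa [Function.iterate_succ_apply', Function.comp_apply, reachable_superposition_right_iff,
        reachable_superposition_left_iff]

lemma iterate_comp_fixed_iff {k : ℕ} (hk : k < Function.minimalPeriod (τ ∘ σ) x) :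
    (σ ((τ ∘ σ)^[k] x) = (τ ∘ σ)^[k] x ∨ τ ((τ ∘ σ)^[k] x) = (τ ∘ σ)^[k] x) ↔
      k = 0 ∨ k = Function.minimalPeriod (τ ∘ σ) x / 2 := by
  have hm := Function.iterate_minimalPeriod (f := τ ∘ σ) (x := x)
  rcases Nat.eq_zero_or_pos k with rfl | hk0
  · simp [hx]
  · rw [left_apply_iterate_comp hσ hτ hx hm hk, right_apply_iterate_comp hσ hτ hx hm hk.le,
      Function.iterate_eq_iterate_iff_of_lt_minimalPeriod (by omega) hk,
      Function.iterate_eq_iterate_iff_of_lt_minimalPeriod (by omega) hk]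
    omega

/-- The orbit of `x` under `τ ∘ σ` is a cycle reversed by both involutions, so besides `x` it
contains exactly one point fixed by one of them: the one halfway round. -/
lemma exists_reachable_fixed_iff (hne : σ x ≠ x) (hper : x ∈ Function.periodicPts (τ ∘ σ)) :
    ∃ y ≠ x, ∀ v, ((superposition σ τ).Reachable x v ∧ (σ v = v ∨ τ v = v)) ↔ v = x ∨ v = y := by
  set m := Function.minimalPeriod (τ ∘ σ) x with hmdef
  have hpos : 0 < m := Function.minimalPeriod_pos_of_mem_periodicPts hper
  have hm : (τ ∘ σ)^[m] x = x := Function.iterate_minimalPeriod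
  have hm1 : m ≠ 1 := fun h ↦ hne <| by
    have hfix : τ (σ x) = x := by rwa [h] at hm
    rw [hτ.eq_iff.1 hfix, hx]
  refine ⟨(τ ∘ σ)^[m / 2] x, fun h ↦ ?_, fun v ↦ ?_⟩
  · have := (Function.iterate_eq_iterate_iff_of_lt_minimalPeriod
      (by omega : m / 2 < m) hpos).1 h
    omega
  · rw [reachable_superposition_iff_exists_iterate hσ hτ hx hm hpos]
    constructor
    · rintro ⟨⟨k, hk, rfl⟩, hfix⟩
      rcases (iterate_comp_fixed_iff hσ hτ hx hk).1 hfix with rfl | rfl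
      exacts [.inl rfl, .inr rfl]
    · rintro (rfl | rfl)
      · exact ⟨⟨0, hpos, rfl⟩, .inr hx⟩
      · have hhalf : m / 2 < m := by omega
        exact ⟨⟨_, hhalf, rfl⟩, (iterate_comp_fixed_iff hσ hτ hx hhalf).2 (.inr rfl)⟩

end FixedStart

section MatchingInvolution

variable [DecidableEq α] {G : SimpleGraph α} {s t : Finset α}

namespace IsMatchingInvolution

lemma mem_periodicPts (hσ : IsMatchingInvolution G s σ) (hτ : IsMatchingInvolution G t τ) {x : α}
    (hx : x ∈ s ∪ t) : x ∈ Function.periodicPts (τ ∘ σ) :=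
  mem_periodicPts_of_mapsTo_finite (s ∪ t).finite_toSet
    (fun _ hv ↦ hτ.apply_mem_of_subset Finset.subset_union_right
      (hσ.apply_mem_of_subset Finset.subset_union_left hv))
    (hτ.involutive.injective.comp hσ.involutive.injective) hx

lemma mem_union_of_reachable (hσ : IsMatchingInvolution G s σ) (hτ : IsMatchingInvolution G t τ)
    {x v : α} (hxv : (superposition σ τ).Reachable x v) (hx : x ∈ s ∪ t) : v ∈ s ∪ t :=
  superposition_reachable_induction (P := (· ∈ s ∪ t)) hσ.involutive hτ.involutive
    (fun _ ↦ hσ.apply_mem_of_subset Finset.subset_union_left)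
    (fun _ ↦ hτ.apply_mem_of_subset Finset.subset_union_right) hxv hx

lemma exists_reachable_iff_of_mem_sdiff (hσ : IsMatchingInvolution G s σ)
    (hτ : IsMatchingInvolution G t τ) {x : α} (hx : x ∈ s \ t) :
    ∃ y ≠ x, ∀ v, (v ∈ s ∆ t ∧ (superposition σ τ).Reachable x v) ↔ v = x ∨ v = y := by
  rw [Finset.mem_sdiff] at hx
  have hxst : x ∈ s ∪ t := Finset.mem_union_left _ hx.1
  obtain ⟨y, hyx, hy⟩ := exists_reachable_fixed_iff hσ.involutive hτ.involutive
    (hτ.apply_of_notMem x hx.2) (by simpa [hσ.apply_eq_self_iff] using hx.1)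
    (hσ.mem_periodicPts hτ hxst)
  refine ⟨y, hyx, fun v ↦ ?_⟩
  rw [← hy, and_comm, and_congr_right_iff, hσ.apply_eq_self_iff, hτ.apply_eq_self_iff,
    Finset.mem_symmDiff]
  intro hv
  have hvst := Finset.mem_union.1 (hσ.mem_union_of_reachable hτ hv hxst)
  tauto

lemma exists_reachable_iff (hσ : IsMatchingInvolution G s σ) (hτ : IsMatchingInvolution G t τ)
    {x : α} (hx : x ∈ s ∆ t) :
    ∃ y ≠ x, ∀ v, (v ∈ s ∆ t ∧ (superposition σ τ).Reachable x v) ↔ v = x ∨ v = y := by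
  rcases Finset.mem_symmDiff.1 hx with hst | hts
  · exact hσ.exists_reachable_iff_of_mem_sdiff hτ (Finset.mem_sdiff.2 hst)
  · rw [symmDiff_comm, superposition_comm]
    exact hτ.exists_reachable_iff_of_mem_sdiff hσ (Finset.mem_sdiff.2 hts)

end IsMatchingInvolution

end MatchingInvolution

/-! ### Exchanging two matchings along a component -/

open Classical in
/-- The involution obtained from `σ` by switching to `τ` on the component of `b` in their
superposition. -/
noncomputable def exchange (σ τ : α → α) (b : α) : α → α :=
  fun v ↦ if (superposition σ τ).Reachable b v then τ v else σ v

lemma exchange_of_reachable {b v : α} (h : (superposition σ τ).Reachable b v) :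
    exchange σ τ b v = τ v := if_pos h

lemma exchange_of_not_reachable {b v : α} (h : ¬(superposition σ τ).Reachable b v) :
    exchange σ τ b v = σ v := if_neg h

lemma superposition_exchange (σ τ : α → α) (b : α) :
    superposition (exchange σ τ b) (exchange τ σ b) = superposition σ τ := by
  have hswap (u v : α) : (exchange σ τ b u = v ∨ exchange τ σ b u = v) ↔ (σ u = v ∨ τ u = v) := by
    by_cases h : (superposition σ τ).Reachable b u
    · rw [exchange_of_reachable h, exchange_of_reachable (superposition_comm σ τ ▸ h), or_comm]
    · rw [exchange_of_not_reachable h, exchange_of_not_reachable (superposition_comm σ τ ▸ h)]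
  simp only [superposition, hswap]

lemma exchange_exchange {b c : α} (h : (superposition σ τ).Reachable b c) :
    exchange (exchange σ τ b) (exchange τ σ b) c = σ := by
  funext v
  by_cases hv : (superposition σ τ).Reachable b v
  · rw [exchange_of_reachable (superposition_exchange σ τ b ▸ h.symm.trans hv),
      exchange_of_reachable (superposition_comm σ τ ▸ hv)]
  · rw [exchange_of_not_reachable fun hcv ↦ hv (h.trans (superposition_exchange σ τ b ▸ hcv)),
      exchange_of_not_reachable hv]

lemma IsMatchingInvolution.symmDiff_exchange [DecidableEq α] {G : SimpleGraph α} {s t U : Finset α}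
    (hσ : IsMatchingInvolution G s σ) (hτ : IsMatchingInvolution G t τ) {b : α}
    (hU : ∀ v, v ∈ s ∆ t ∧ (superposition σ τ).Reachable b v ↔ v ∈ U) :
    IsMatchingInvolution G (s ∆ U) (exchange σ τ b) := by
  have hmem_of_reachable {v : α} (h : (superposition σ τ).Reachable b v) :
      v ∈ s ∆ U ↔ v ∈ t := by
    simp only [Finset.mem_symmDiff, ← hU, h]
    tauto
  have hmem_of_not_reachable {v : α} (h : ¬(superposition σ τ).Reachable b v) :
      v ∈ s ∆ U ↔ v ∈ s := by
    simp only [Finset.mem_symmDiff, ← hU, h]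
    tauto
  constructor
  · intro v
    by_cases h : (superposition σ τ).Reachable b v
    · rw [exchange_of_reachable h,
        exchange_of_reachable ((reachable_superposition_right_iff σ τ).2 h), hτ.involutive]
    · rw [exchange_of_not_reachable h,
        exchange_of_not_reachable (mt (reachable_superposition_left_iff σ τ).1 h), hσ.involutive]
  · intro v hv
    by_cases h : (superposition σ τ).Reachable b v
    · rw [exchange_of_reachable h]
      exact hτ.adj v ((hmem_of_reachable h).1 hv)
    · rw [exchange_of_not_reachable h]
      exact hσ.adj v ((hmem_of_not_reachable h).1 hv)
  · intro v hv
    by_cases h : (superposition σ τ).Reachable b v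
    · rw [exchange_of_reachable h, hτ.apply_of_notMem v (mt (hmem_of_reachable h).2 hv)]
    · rw [exchange_of_not_reachable h, hσ.apply_of_notMem v (mt (hmem_of_not_reachable h).2 hv)]

end Superposition

/-! ### Noncrossing vertex families -/

/-- The graph `G` is noncrossing with respect to the family of vertices `a`, in the cyclic order
induced by the linear order of the index type. For `ι = Fin n` this is `NoncrossingList`. -/
def IsNoncrossing {ι α : Type*} [LT ι] (G : SimpleGraph α) (a : ι → α) : Prop :=
  ∀ ⦃i j k l : ι⦄, i < j → j < k → k < l →
    ¬DisjointPaths G (Set.range a) (a i) (a k) (a j) (a l)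

lemma NoncrossingList.isNoncrossing {α : Type*} {G : SimpleGraph α} {n : ℕ} {a : Fin n → α}
    (h : NoncrossingList G (List.ofFn a)) : IsNoncrossing G a := by
  intro i j k l hij hjk hkl
  have hrange : {x | x ∈ List.ofFn a} = Set.range a := by
    ext
    exact List.mem_ofFn
  simpa only [hrange, List.get_ofFn, Fin.cast_cast, Fin.cast_eq_self] using
    h (i.cast List.length_ofFn.symm) (j.cast List.length_ofFn.symm)
      (k.cast List.length_ofFn.symm) (l.cast List.length_ofFn.symm) hij hjk hkl

namespace DisjointPaths

variable {α : Type*} {G : SimpleGraph α} {S : Set α} {x y z w : α}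

lemma swap (h : DisjointPaths G S x y z w) : DisjointPaths G S z w x y := by
  obtain ⟨p, q, hp, hq, hpq, hpS, hqS⟩ := h
  exact ⟨q, p, hq, hp, fun u hu hu' ↦ hpq u hu' hu, hqS, hpS⟩

lemma reverse_left (h : DisjointPaths G S x y z w) : DisjointPaths G S y x z w := by
  obtain ⟨p, q, hp, hq, hpq, hpS, hqS⟩ := h
  refine ⟨p.reverse, q, hp.reverse, hq, ?_, ?_, hqS⟩ <;>
    simp only [SimpleGraph.Walk.support_reverse, List.mem_reverse]
  exacts [hpq, fun u hu huy hux ↦ hpS u hu hux huy]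

lemma reverse_right (h : DisjointPaths G S x y z w) : DisjointPaths G S x y w z :=
  h.swap.reverse_left.swap

lemma ne_left_left (h : DisjointPaths G S x y z w) : x ≠ z := by
  rintro rfl
  obtain ⟨p, q, -, -, hpq, -⟩ := h
  exact hpq x p.start_mem_support q.start_mem_support

end DisjointPaths

lemma mem_uIoo_iff_mem_uIoo_comm {ι : Type*} [LinearOrder ι] {x y z w : ι} (hxz : x ≠ z)
    (hxw : x ≠ w) (hyz : y ≠ z) (hyw : y ≠ w) :
    (z ∈ Set.uIoo x y ↔ w ∈ Set.uIoo x y) ↔ (x ∈ Set.uIoo z w ↔ y ∈ Set.uIoo z w) := by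
  simp only [Set.uIoo, Set.mem_Ioo, inf_lt_iff, lt_sup_iff]
  grind

lemma exists_isPath_forall_notMem_range {ι α : Type*} {G : SimpleGraph α} {a : ι → α}
    {D : ι → Prop} {x y : ι} (p : G.Walk (a x) (a y)) (hD : ¬(D x ↔ D y)) :
    ∃ x' y', ¬(D x' ↔ D y') ∧ ∃ p' : G.Walk (a x') (a y'), p'.IsPath ∧
      p'.support ⊆ p.support ∧ ∀ u ∈ p'.support, u ≠ a x' → u ≠ a y' → u ∉ Set.range a := by
  classical
  induction hn : p.length using Nat.strong_induction_on generalizing x y with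
  | _ n ih =>
    subst hn
    by_cases hclean : ∀ u ∈ p.support, u ≠ a x → u ≠ a y → u ∉ Set.range a
    · exact ⟨x, y, hD, p.bypass, p.bypass_isPath, p.support_bypass_subset_support,
        fun u hu ↦ hclean u (p.support_bypass_subset_support hu)⟩
    push Not at hclean
    obtain ⟨_, hz, hzx, hzy, z, rfl⟩ := hclean
    by_cases hDz : D x ↔ D z
    · obtain ⟨x', y', hD', p', hp', hsub, hclean'⟩ :=
        ih _ (SimpleGraph.Walk.length_dropUntil_lt_length hz hzx) (p.dropUntil _ hz)
          (by rwa [← hDz]) rfl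
      exact ⟨x', y', hD', p', hp',
        List.Subset.trans hsub (p.support_dropUntil_subset_support hz), hclean'⟩
    · obtain ⟨x', y', hD', p', hp', hsub, hclean'⟩ :=
        ih _ (SimpleGraph.Walk.length_takeUntil_lt_length hz hzy) (p.takeUntil _ hz) hDz rfl
      exact ⟨x', y', hD', p', hp',
        List.Subset.trans hsub (p.support_takeUntil_subset_support hz), hclean'⟩

namespace IsNoncrossing

variable {ι α : Type*} [LinearOrder ι] {G : SimpleGraph α} {a : ι → α} {x y z w : ι}

lemma mem_uIoo_of_disjointPaths (hnc : IsNoncrossing G a)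
    (h : DisjointPaths G (Set.range a) (a x) (a y) (a z) (a w)) (hz : z ∈ Set.uIoo x y) :
    w ∈ Set.uIoo x y := by
  wlog hxy : x ≤ y generalizing x y
  · rw [Set.uIoo_comm] at hz ⊢
    exact this h.reverse_left hz (not_le.1 hxy).le
  rw [Set.uIoo_of_le hxy] at hz ⊢
  have hxw : x ≠ w := fun hxw ↦ h.reverse_right.ne_left_left (congrArg a hxw)
  have hyw : y ≠ w := fun hyw ↦ h.reverse_left.reverse_right.ne_left_left (congrArg a hyw)
  refine ⟨lt_of_not_ge fun hwx ↦ ?_, lt_of_not_ge fun hyw' ↦ ?_⟩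
  · exact hnc (hwx.lt_of_ne hxw.symm) hz.1 hz.2 h.swap.reverse_left
  · exact hnc hz.1 hz.2 (hyw'.lt_of_ne hyw) h

/-- Were the claim false, shortening `q` and then `p` to segments between consecutive visits to
the family would produce a crossing pair of disjoint paths. -/
lemma mem_uIoo_iff_of_disjoint_support (hnc : IsNoncrossing G a) (p : G.Walk (a x) (a y))
    (q : G.Walk (a z) (a w)) (hpq : p.support.Disjoint q.support) :
    z ∈ Set.uIoo x y ↔ w ∈ Set.uIoo x y := by
  by_contra hzw
  obtain ⟨z', w', hzw', q', hq', hqsub, hqclean⟩ := exists_isPath_forall_notMem_range q hzw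
  have hne {i j : ι} (hi : a i ∈ p.support) (hj : a j ∈ q'.support) : i ≠ j := by
    rintro rfl
    exact hpq hi (hqsub hj)
  rw [mem_uIoo_iff_mem_uIoo_comm (hne p.start_mem_support q'.start_mem_support)
    (hne p.start_mem_support q'.end_mem_support) (hne p.end_mem_support q'.start_mem_support)
    (hne p.end_mem_support q'.end_mem_support)] at hzw'
  obtain ⟨x', y', hxy', p', hp', hpsub, hpclean⟩ := exists_isPath_forall_notMem_range p hzw'
  have hdisjoint : DisjointPaths G (Set.range a) (a z') (a w') (a x') (a y') :=
    ⟨q', p', hq', hp', fun u hq hp ↦ hpq (hpsub hp) (hqsub hq), hqclean, hpclean⟩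
  exact hxy' ⟨hnc.mem_uIoo_of_disjointPaths hdisjoint,
    hnc.mem_uIoo_of_disjointPaths hdisjoint.reverse_right⟩

lemma mem_uIoo_iff_of_reachable {G' : SimpleGraph α} (hnc : IsNoncrossing G a) (hle : G' ≤ G)
    (hxy : G'.Reachable (a x) (a y)) (hzw : G'.Reachable (a z) (a w))
    (hxz : ¬G'.Reachable (a x) (a z)) : z ∈ Set.uIoo x y ↔ w ∈ Set.uIoo x y := by
  obtain ⟨p⟩ := hxy
  obtain ⟨q⟩ := hzw
  refine hnc.mem_uIoo_iff_of_disjoint_support (p.mapLe hle) (q.mapLe hle) fun u hp hq ↦ hxz ?_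
  rw [SimpleGraph.Walk.support_mapLe_eq_support] at hp hq
  classical
  exact (p.takeUntil u hp).reachable.trans (q.takeUntil u hq).reachable.symm

end IsNoncrossing

/-! ### Pairing the ends of the components -/

lemma even_card_of_fixedPointFree_involution {β : Type*} {s : Finset β} {f : β → β}
    (hmem : ∀ b ∈ s, f b ∈ s) (hne : ∀ b ∈ s, f b ≠ b) (hinv : ∀ b ∈ s, f (f b) = b) :
    Even s.card := by
  have hsum : ∑ _b ∈ s, (1 : ZMod 2) = 0 :=
    Finset.sum_involution (fun b _ ↦ f b) (fun _ _ ↦ by decide) (fun b hb _ ↦ hne b hb) hmem hinv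
  rwa [Finset.sum_const, nsmul_one, ZMod.natCast_eq_zero_iff_even] at hsum

instance decidableMemUIoo {ι : Type*} [LinearOrder ι] (i j k : ι) : Decidable (k ∈ Set.uIoo i j) :=
  inferInstanceAs (Decidable (k ∈ Set.Ioo (i ⊓ j) (i ⊔ j)))

/-- The vertices `a i`, `i ∈ T`, are joined in pairs by `Γ`: each is in the same component as
exactly one other. -/
def ConnectsInPairs {ι α : Type*} (Γ : SimpleGraph α) (a : ι → α) (T : Finset ι) : Prop :=
  ∀ i ∈ T, ∃! j, j ∈ T ∧ j ≠ i ∧ Γ.Reachable (a i) (a j)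

open Classical in
/-- The index `j ≠ i` in `T` for which `Γ` joins `a i` to `a j`, or `i` if there is none. -/
noncomputable def partner {ι α : Type*} (Γ : SimpleGraph α) (a : ι → α) (T : Finset ι) (i : ι) :
    ι :=
  if h : ∃ j, j ∈ T ∧ j ≠ i ∧ Γ.Reachable (a i) (a j) then h.choose else i

namespace ConnectsInPairs

variable {ι α : Type*} {Γ : SimpleGraph α} {a : ι → α} {T : Finset ι} {i j : ι}

lemma partner_spec (h : ConnectsInPairs Γ a T) (hi : i ∈ T) :
    partner Γ a T i ∈ T ∧ partner Γ a T i ≠ i ∧ Γ.Reachable (a i) (a (partner Γ a T i)) := by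
  rw [partner, dif_pos (h i hi).exists]
  exact (h i hi).exists.choose_spec

lemma partner_mem (h : ConnectsInPairs Γ a T) (hi : i ∈ T) : partner Γ a T i ∈ T :=
  (h.partner_spec hi).1

lemma partner_ne (h : ConnectsInPairs Γ a T) (hi : i ∈ T) : partner Γ a T i ≠ i :=
  (h.partner_spec hi).2.1

lemma reachable_partner (h : ConnectsInPairs Γ a T) (hi : i ∈ T) :
    Γ.Reachable (a i) (a (partner Γ a T i)) :=
  (h.partner_spec hi).2.2

lemma reachable_iff (h : ConnectsInPairs Γ a T) (hi : i ∈ T) (hj : j ∈ T) :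
    Γ.Reachable (a i) (a j) ↔ j = i ∨ j = partner Γ a T i := by
  refine ⟨fun hij ↦ or_iff_not_imp_left.2 fun hne ↦ ?_, ?_⟩
  · exact (h i hi).unique ⟨hj, hne, hij⟩ (h.partner_spec hi)
  · rintro (rfl | rfl)
    exacts [.rfl, h.reachable_partner hi]

lemma partner_partner (h : ConnectsInPairs Γ a T) (hi : i ∈ T) :
    partner Γ a T (partner Γ a T i) = i := by
  have hreach := (h.reachable_iff (h.partner_mem hi) hi).1 (h.reachable_partner hi).symm
  exact (hreach.resolve_left (h.partner_ne hi).symm).symm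

variable [LinearOrder ι] {G : SimpleGraph α}

lemma even_card_filter_mem_uIoo (h : ConnectsInPairs Γ a T) (hle : Γ ≤ G)
    (hnc : IsNoncrossing G a) (hi : i ∈ T) :
    Even {k ∈ T | k ∈ Set.uIoo i (partner Γ a T i)}.card := by
  refine even_card_of_fixedPointFree_involution (f := partner Γ a T) ?_ ?_ ?_ <;>
    simp only [Finset.mem_filter, and_imp]
  · refine fun k hk hik ↦ ⟨h.partner_mem hk, ?_⟩
    refine (hnc.mem_uIoo_iff_of_reachable hle (h.reachable_partner hi) (h.reachable_partner hk)
      fun hreach ↦ ?_).1 hik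
    rcases (h.reachable_iff hi hk).1 hreach with rfl | rfl
    exacts [Set.left_notMem_uIoo hik, Set.right_notMem_uIoo hik]
  · exact fun k hk _ ↦ h.partner_ne hk
  · exact fun k hk _ ↦ h.partner_partner hk

end ConnectsInPairs

lemma IsMatchingInvolution.connectsInPairs {ι α : Type*} [DecidableEq α] {G : SimpleGraph α}
    {s : Finset α} {T : Finset ι} {a : ι ↪ α} {σ τ : α → α} (hσ : IsMatchingInvolution G s σ)
    (hτ : IsMatchingInvolution G (s ∆ T.map a) τ) : ConnectsInPairs (superposition σ τ) a T := by
  intro i hi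
  obtain ⟨y, hyi, hy⟩ := hσ.exists_reachable_iff hτ (x := a i) (by simpa using hi)
  simp only [symmDiff_symmDiff_cancel_left] at hy
  obtain ⟨hyT, hreach⟩ := (hy y).2 (.inr rfl)
  obtain ⟨j, hj, rfl⟩ := Finset.mem_map.1 hyT
  refine ⟨j, ⟨hj, fun hji ↦ hyi (congrArg a hji), hreach⟩, fun k ⟨hk, hki, hik⟩ ↦ ?_⟩
  rcases (hy (a k)).1 ⟨Finset.mem_map_of_mem a hk, hik⟩ with h | h
  exacts [absurd (a.injective h) hki, a.injective h]

/-! ### The linear relation between products of matching numbers -/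

section CountLT

variable {ι : Type*} [LinearOrder ι]

/-- The number of elements of `T` below `i`, that is, the position of `i` in `T` counted from
zero when `i ∈ T`. -/
def countLT (T : Finset ι) (i : ι) : ℕ := {k ∈ T | k < i}.card

lemma countLT_eq_zero {T : Finset ι} {i : ι} (h : ∀ k ∈ T, i ≤ k) : countLT T i = 0 :=
  Finset.card_eq_zero.2 <| Finset.filter_eq_empty_iff.2 fun k hk ↦ not_lt.2 (h k hk)

lemma countLT_insert_of_lt {T : Finset ι} {i j : ι} (hi : i ∉ T) (hij : i < j) :
    countLT (insert i T) j = countLT T j + 1 := by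
  rw [countLT, Finset.filter_insert, if_pos hij, Finset.card_insert_of_notMem (by simp [hi]),
    countLT]

lemma countLT_eq_add_card_filter_Ioo {T : Finset ι} {i j : ι} (hi : i ∈ T) (hij : i < j) :
    countLT T j = countLT T i + 1 + {k ∈ T | k ∈ Set.Ioo i j}.card := by
  have hsplit : {k ∈ T | k < j} = insert i {k ∈ T | k < i} ∪ {k ∈ T | k ∈ Set.Ioo i j} := by
    ext k
    simp only [Finset.mem_filter, Finset.mem_union, Finset.mem_insert, Set.mem_Ioo]
    grind
  have hdisj : Disjoint (insert i {k ∈ T | k < i}) {k ∈ T | k ∈ Set.Ioo i j} := by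
    simp only [Finset.disjoint_left, Finset.mem_filter, Finset.mem_insert, Set.mem_Ioo]
    grind
  rw [countLT, hsplit, Finset.card_union_of_disjoint hdisj,
    Finset.card_insert_of_notMem (by simp), countLT]

lemma neg_one_pow_countLT_add_eq_zero {R : Type*} [Ring R] {T : Finset ι} {i j : ι} (hi : i ∈ T)
    (hj : j ∈ T) (hij : i ≠ j) (heven : Even {k ∈ T | k ∈ Set.uIoo i j}.card) :
    (-1 : R) ^ countLT T i + (-1) ^ countLT T j = 0 := by
  wlog hlt : i < j generalizing i j
  · rw [add_comm]
    exact this hj hi hij.symm (by simpa only [Set.uIoo_comm j i] using heven)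
      (hij.symm.lt_of_le (not_lt.1 hlt))
  simp only [Set.uIoo_of_lt hlt] at heven
  rw [countLT_eq_add_card_filter_Ioo hi hlt, pow_add, heven.neg_one_pow, pow_succ]
  simp

end CountLT

section Condensation

variable {ι α : Type*} [DecidableEq α] {G : SimpleGraph α} {a : ι ↪ α}

lemma singleton_symmDiff_singleton {u v : α} (h : u ≠ v) :
    ({u} : Finset α) ∆ {v} = {u, v} := by
  rw [(Finset.disjoint_singleton.2 h).symmDiff_eq_sup, Finset.sup_eq_union,
    Finset.singleton_union]

namespace IsMatchingInvolution

variable {s : Finset α} {T : Finset ι} {i : ι} {σ τ : α → α}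

lemma exchange_left (hi : i ∈ T) (hσ : IsMatchingInvolution G s σ)
    (hτ : IsMatchingInvolution G (s ∆ T.map a) τ) :
    IsMatchingInvolution G (s ∆ {a i, a (partner (superposition σ τ) a T i)})
      (exchange σ τ (a i)) := by
  have hpairs := hσ.connectsInPairs hτ
  refine hσ.symmDiff_exchange hτ fun v ↦ ?_
  rw [symmDiff_symmDiff_cancel_left, Finset.mem_insert, Finset.mem_singleton]
  constructor
  · rintro ⟨hv, hreach⟩
    obtain ⟨j, hj, rfl⟩ := Finset.mem_map.1 hv
    simpa only [a.apply_eq_iff_eq] using (hpairs.reachable_iff hi hj).1 hreach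
  · rintro (rfl | rfl)
    · exact ⟨Finset.mem_map_of_mem a hi, .rfl⟩
    · exact ⟨Finset.mem_map_of_mem a (hpairs.partner_mem hi), hpairs.reachable_partner hi⟩

lemma exchange_right (hi : i ∈ T) (hσ : IsMatchingInvolution G s σ)
    (hτ : IsMatchingInvolution G (s ∆ T.map a) τ) :
    IsMatchingInvolution G (s ∆ {a i, a (partner (superposition σ τ) a T i)} ∆ T.map a)
      (exchange τ σ (a i)) := by
  rw [symmDiff_right_comm, superposition_comm]
  exact exchange_left hi hτ (by rwa [symmDiff_symmDiff_cancel_right])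

end IsMatchingInvolution

/-- The pairs of matchings counted by the `i`-th term of
`sum_neg_one_pow_countLT_mul_pmCount_eq_zero`, together with the index `i`. -/
noncomputable def indexedMatchingPairs (G : SimpleGraph α) (a : ι ↪ α) (K : Finset α)
    (T : Finset ι) : Finset (Σ _ : ι, (α → α) × (α → α)) :=
  T.sigma fun i ↦ matchingInvolutions G (K ∆ {a i}) ×ˢ matchingInvolutions G (K ∆ {a i} ∆ T.map a)

/-- Exchange the two matchings along the component of `a i`, whose other end in `T.map a` becomes
the new index. -/
noncomputable def exchangePair (a : ι ↪ α) (T : Finset ι) (x : Σ _ : ι, (α → α) × (α → α)) :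
    Σ _ : ι, (α → α) × (α → α) :=
  ⟨partner (superposition x.2.1 x.2.2) a T x.1,
    exchange x.2.1 x.2.2 (a x.1), exchange x.2.2 x.2.1 (a x.1)⟩

section ExchangePair

variable {K : Finset α} {T : Finset ι} {x : Σ _ : ι, (α → α) × (α → α)}

lemma mem_indexedMatchingPairs : x ∈ indexedMatchingPairs G a K T ↔
    x.1 ∈ T ∧ IsMatchingInvolution G (K ∆ {a x.1}) x.2.1 ∧
      IsMatchingInvolution G (K ∆ {a x.1} ∆ T.map a) x.2.2 := by
  simp [indexedMatchingPairs]

lemma connectsInPairs_of_mem_indexedMatchingPairs (hx : x ∈ indexedMatchingPairs G a K T) :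
    ConnectsInPairs (superposition x.2.1 x.2.2) a T := by
  obtain ⟨-, hσ, hτ⟩ := mem_indexedMatchingPairs.1 hx
  exact hσ.connectsInPairs hτ

lemma exchangePair_mem (hx : x ∈ indexedMatchingPairs G a K T) :
    exchangePair a T x ∈ indexedMatchingPairs G a K T := by
  have hpairs := connectsInPairs_of_mem_indexedMatchingPairs hx
  obtain ⟨hi, hσ, hτ⟩ := mem_indexedMatchingPairs.1 hx
  have hmove : K ∆ {a x.1} ∆ {a x.1, a (partner (superposition x.2.1 x.2.2) a T x.1)} =
      K ∆ {a (partner (superposition x.2.1 x.2.2) a T x.1)} := by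
    rw [← singleton_symmDiff_singleton (a.injective.ne (hpairs.partner_ne hi).symm),
      symmDiff_assoc, symmDiff_symmDiff_cancel_left]
  exact mem_indexedMatchingPairs.2 ⟨hpairs.partner_mem hi,
    hmove ▸ hσ.exchange_left hi hτ, hmove ▸ hσ.exchange_right hi hτ⟩

lemma exchangePair_exchangePair (hx : x ∈ indexedMatchingPairs G a K T) :
    exchangePair a T (exchangePair a T x) = x := by
  have hi := (mem_indexedMatchingPairs.1 hx).1
  have hpairs := connectsInPairs_of_mem_indexedMatchingPairs hx
  have hreach := hpairs.reachable_partner hi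
  have hright : exchange (exchange x.2.2 x.2.1 (a x.1)) (exchange x.2.1 x.2.2 (a x.1))
      (a (partner (superposition x.2.1 x.2.2) a T x.1)) = x.2.2 :=
    exchange_exchange (by rwa [superposition_comm x.2.2 x.2.1])
  simp only [exchangePair, superposition_exchange, hpairs.partner_partner hi,
    exchange_exchange hreach, hright]

end ExchangePair

variable [LinearOrder ι]

lemma neg_one_pow_countLT_exchangePair (hnc : IsNoncrossing G a) {K : Finset α} {T : Finset ι}
    {x : Σ _ : ι, (α → α) × (α → α)} (hx : x ∈ indexedMatchingPairs G a K T) :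
    (-1 : ℤ) ^ countLT T x.1 + (-1) ^ countLT T (exchangePair a T x).1 = 0 := by
  have hpairs := connectsInPairs_of_mem_indexedMatchingPairs hx
  obtain ⟨hi, hσ, hτ⟩ := mem_indexedMatchingPairs.1 hx
  exact neg_one_pow_countLT_add_eq_zero hi (hpairs.partner_mem hi) (hpairs.partner_ne hi).symm
    (hpairs.even_card_filter_mem_uIoo (hσ.superposition_le hτ) hnc hi)

theorem sum_neg_one_pow_countLT_mul_pmCount_eq_zero (hnc : IsNoncrossing G a) (K : Finset α)
    (T : Finset ι) :
    ∑ i ∈ T, (-1 : ℤ) ^ countLT T i *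
      (pmCount G (K ∆ {a i}) * pmCount G (K ∆ {a i} ∆ T.map a)) = 0 := by
  calc
    _ = ∑ x ∈ indexedMatchingPairs G a K T, (-1 : ℤ) ^ countLT T x.1 := by
      rw [indexedMatchingPairs, Finset.sum_sigma]
      simp only [Finset.sum_const, Finset.card_product, card_matchingInvolutions, nsmul_eq_mul,
        Nat.cast_mul, mul_comm]
    _ = 0 := Finset.sum_involution (fun x _ ↦ exchangePair a T x)
      (fun _ hx ↦ neg_one_pow_countLT_exchangePair hnc hx)
      (fun x hx _ h ↦ (connectsInPairs_of_mem_indexedMatchingPairs hx).partner_ne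
        (mem_indexedMatchingPairs.1 hx).1 (congrArg Sigma.fst h))
      (fun _ hx ↦ exchangePair_mem hx) fun _ hx ↦ exchangePair_exchangePair hx

lemma symmDiff_singletons_symmDiff_map_insert (H : Finset α) {T : Finset ι} {i j : ι} (hi : i ∉ T)
    (hj : j ∈ T) : H ∆ {a i} ∆ {a j} ∆ (insert i T).map a = H ∆ (T.erase j).map a := by
  have hij : i ≠ j := fun h ↦ hi (h ▸ hj)
  ext v
  simp only [Finset.mem_symmDiff, Finset.mem_singleton, Finset.mem_map, Finset.mem_insert,
    Finset.mem_erase]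
  grind

/-- `sum_neg_one_pow_countLT_mul_pmCount_eq_zero` for `K = H ∆ {a i}`, with the term of the smallest
index `i` singled out. -/
theorem pmCount_mul_pmCount_symmDiff_map_insert (hnc : IsNoncrossing G a) (H : Finset α)
    {T : Finset ι} {i : ι} (hi : ∀ j ∈ T, i < j) :
    (pmCount G H * pmCount G (H ∆ (insert i T).map a) : ℤ) =
      ∑ j ∈ T, (-1 : ℤ) ^ countLT T j *
        (pmCount G (H ∆ {a i, a j}) * pmCount G (H ∆ (T.erase j).map a)) := by
  have hiT : i ∉ T := fun h ↦ (hi i h).false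
  have hpair {j : ι} (hj : j ∈ T) : H ∆ {a i} ∆ {a j} = H ∆ {a i, a j} := by
    rw [symmDiff_assoc, singleton_symmDiff_singleton (a.injective.ne (hi j hj).ne)]
  have hrel := sum_neg_one_pow_countLT_mul_pmCount_eq_zero hnc (H ∆ {a i}) (insert i T)
  rw [Finset.sum_insert hiT, countLT_eq_zero (by grind), symmDiff_symmDiff_cancel_right, pow_zero,
    one_mul] at hrel
  rw [eq_neg_of_add_eq_zero_left hrel, ← Finset.sum_neg_distrib]
  refine Finset.sum_congr rfl fun j hj ↦ ?_
  rw [countLT_insert_of_lt hiT (hi j hj), symmDiff_singletons_symmDiff_map_insert H hiT hj,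
    hpair hj]
  ring

end Condensation

/-! ### Pfaffians indexed by a finite set -/

/-- A partition of `T` into pairs, each recorded with its smaller element first. For `T = univ`
in `Fin n` this is `IsOneFactor`. -/
structure IsOneFactorOn {ι : Type*} [LT ι] (T : Finset ι) (F : Finset (ι × ι)) : Prop where
  lt : ∀ p ∈ F, p.1 < p.2
  subset : F ⊆ T ×ˢ T
  existsUnique : ∀ v ∈ T, ∃! p, p ∈ F ∧ (v = p.1 ∨ v = p.2)

section Pfaffian

variable {ι R : Type*} [LinearOrder ι]

namespace IsOneFactorOn

variable {T : Finset ι} {F : Finset (ι × ι)} {i j : ι}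

lemma fst_mem (hF : IsOneFactorOn T F) {p : ι × ι} (hp : p ∈ F) : p.1 ∈ T :=
  (Finset.mem_product.1 (hF.subset hp)).1

lemma snd_mem (hF : IsOneFactorOn T F) {p : ι × ι} (hp : p ∈ F) : p.2 ∈ T :=
  (Finset.mem_product.1 (hF.subset hp)).2

lemma eq_of_mem_of_mem (hF : IsOneFactorOn T F) {p q : ι × ι} (hp : p ∈ F) (hq : q ∈ F) {v : ι}
    (hvp : v = p.1 ∨ v = p.2) (hvq : v = q.1 ∨ v = q.2) : p = q := by
  have hv : v ∈ T := by
    rcases hvp with rfl | rfl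
    exacts [hF.fst_mem hp, hF.snd_mem hp]
  exact (hF.existsUnique v hv).unique ⟨hp, hvp⟩ ⟨hq, hvq⟩

lemma insert (hF : IsOneFactorOn T F) (hij : i < j) (hi : i ∉ T) (hj : j ∉ T) :
    IsOneFactorOn (insert i (insert j T)) (insert (i, j) F) where
  lt := (Finset.forall_mem_insert ..).2 ⟨hij, hF.lt⟩
  subset := by
    refine Finset.insert_subset (by simp) (hF.subset.trans ?_)
    gcongr <;> grind
  existsUnique v hv := by
    have hmem {p : ι × ι} (hp : p ∈ F) : p.1 ∈ T ∧ p.2 ∈ T := ⟨hF.fst_mem hp, hF.snd_mem hp⟩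
    by_cases hvij : v = i ∨ v = j
    · refine ⟨(i, j), ⟨Finset.mem_insert_self .., hvij⟩, ?_⟩
      grind
    · obtain ⟨p, ⟨hp, hvp⟩, hunique⟩ := hF.existsUnique v (by grind)
      exact ⟨p, ⟨Finset.mem_insert_of_mem hp, hvp⟩, by grind⟩

lemma erase (hF : IsOneFactorOn T F) (hij : (i, j) ∈ F) :
    IsOneFactorOn ((T.erase i).erase j) (F.erase (i, j)) where
  lt p hp := hF.lt p (Finset.mem_of_mem_erase hp)
  subset p hp := by
    obtain ⟨hne, hp⟩ := Finset.mem_erase.1 hp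
    have hneq {v : ι} (hvp : v = p.1 ∨ v = p.2) (hv : v = i ∨ v = j) : False :=
      hne (hF.eq_of_mem_of_mem hp hij hvp hv)
    have := hF.fst_mem hp
    have := hF.snd_mem hp
    simp only [Finset.mem_product, Finset.mem_erase]
    grind
  existsUnique v hv := by
    obtain ⟨hvj, hvi, hv⟩ : v ≠ j ∧ v ≠ i ∧ v ∈ T := by simpa using hv
    obtain ⟨p, ⟨hp, hvp⟩, hunique⟩ := hF.existsUnique v hv
    exact ⟨p, ⟨Finset.mem_erase.2 ⟨by grind, hp⟩, hvp⟩, by grind⟩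

lemma prod_eq [CommMonoid R] (hF : IsOneFactorOn T F) (g : ι → R) :
    ∏ k ∈ T, g k = ∏ p ∈ F, g p.1 * g p.2 := by
  have hT : T = F.biUnion fun p ↦ {p.1, p.2} := by
    ext v
    simp only [Finset.mem_biUnion, Finset.mem_insert, Finset.mem_singleton]
    refine ⟨fun hv ↦ (hF.existsUnique v hv).exists, ?_⟩
    rintro ⟨p, hp, rfl | rfl⟩
    exacts [hF.fst_mem hp, hF.snd_mem hp]
  have hdisj : (F : Set (ι × ι)).PairwiseDisjoint fun p ↦ ({p.1, p.2} : Finset ι) := by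
    intro p hp q hq hpq
    refine Finset.disjoint_left.2 fun v hvp hvq ↦ hpq (hF.eq_of_mem_of_mem hp hq (v := v) ?_ ?_)
    exacts [by simpa using hvp, by simpa using hvq]
  rw [hT, Finset.prod_biUnion hdisj]
  exact Finset.prod_congr rfl fun p hp ↦ Finset.prod_pair (hF.lt p hp).ne

end IsOneFactorOn

open Classical in
/-- The partitions of `T` into pairs. -/
noncomputable def oneFactors (T : Finset ι) : Finset (Finset (ι × ι)) :=
  {F ∈ (T ×ˢ T).powerset | IsOneFactorOn T F}

lemma mem_oneFactors {T : Finset ι} {F : Finset (ι × ι)} :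
    F ∈ oneFactors T ↔ IsOneFactorOn T F := by
  simp only [oneFactors, Finset.mem_filter, Finset.mem_powerset]
  exact and_iff_right_of_imp IsOneFactorOn.subset

/-- The crossing pairs of members of `F`; their number is `crossingNumber` when `ι = Fin n`. -/
def crossings (F : Finset (ι × ι)) : Finset ((ι × ι) × (ι × ι)) :=
  {q ∈ F ×ˢ F | q.1.1 < q.2.1 ∧ q.2.1 < q.1.2 ∧ q.1.2 < q.2.2}

lemma card_crossings_insert {F : Finset (ι × ι)} {i j : ι} (hi : ∀ p ∈ F, i < p.1) :
    (crossings (insert (i, j) F)).card =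
      (crossings F).card + {p ∈ F | p.1 < j ∧ j < p.2}.card := by
  have hsplit : crossings (insert (i, j) F) =
      crossings F ∪ {p ∈ F | p.1 < j ∧ j < p.2}.image fun p ↦ ((i, j), p) := by
    ext ⟨p, q⟩
    simp only [crossings, Finset.mem_filter, Finset.mem_product, Finset.mem_insert,
      Finset.mem_union, Finset.mem_image, Prod.mk.injEq]
    grind
  have hdisj : Disjoint (crossings F)
      ({p ∈ F | p.1 < j ∧ j < p.2}.image fun p ↦ ((i, j), p)) := by
    simp only [Finset.disjoint_left, crossings, Finset.mem_filter, Finset.mem_product,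
      Finset.mem_image]
    grind
  rw [hsplit, Finset.card_union_of_disjoint hdisj,
    Finset.card_image_of_injective _ (Prod.mk_right_injective _)]

/-- An element below `j` contributes to the right-hand side unless its mate is also below `j`, so
modulo two only the pairs straddling `j` count. -/
lemma IsOneFactorOn.neg_one_pow_card_filter_eq [CommRing R] {T : Finset ι} {F : Finset (ι × ι)}
    (hF : IsOneFactorOn T F) {j : ι} (hj : j ∉ T) :
    (-1 : R) ^ {p ∈ F | p.1 < j ∧ j < p.2}.card = (-1) ^ countLT T j := by
  have hsign {β : Type _} (s : Finset β) (P : β → Prop) [DecidablePred P] :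
      (-1 : R) ^ {b ∈ s | P b}.card = ∏ b ∈ s, if P b then -1 else 1 := by
    rw [Finset.prod_ite, Finset.prod_const, Finset.prod_const_one, mul_one]
  rw [countLT, hsign, hsign, hF.prod_eq]
  refine Finset.prod_congr rfl fun p hp ↦ ?_
  have hlt := hF.lt p hp
  have hne : p.2 ≠ j := fun h ↦ hj (h ▸ hF.snd_mem hp)
  split_ifs <;> grind

/-- The Pfaffian of the entries `w i j`, `i < j` in `T`, as a signed sum over the partitions of
`T` into pairs. -/
noncomputable def pfaffian [CommRing R] (w : ι → ι → R) (T : Finset ι) : R :=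
  ∑ F ∈ oneFactors T, (-1) ^ (crossings F).card * ∏ p ∈ F, w p.1 p.2

lemma oneFactors_empty : oneFactors (∅ : Finset ι) = {∅} := by
  ext F
  rw [mem_oneFactors, Finset.mem_singleton]
  refine ⟨fun hF ↦ Finset.subset_empty.1 (by simpa using hF.subset), ?_⟩
  rintro rfl
  constructor <;> simp

lemma pfaffian_empty [CommRing R] (w : ι → ι → R) : pfaffian w ∅ = 1 := by
  simp [pfaffian, oneFactors_empty, crossings]

section Expansion

variable {T : Finset ι} {i j : ι} {F : Finset (ι × ι)}

lemma insert_mem_oneFactors_insert (hi : ∀ k ∈ T, i < k) (hj : j ∈ T)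
    (hF : F ∈ oneFactors (T.erase j)) : insert (i, j) F ∈ oneFactors (insert i T) := by
  rw [mem_oneFactors] at hF ⊢
  have hinsert := hF.insert (hi j hj) (fun h ↦ (hi i (Finset.mem_of_mem_erase h)).false)
    (Finset.notMem_erase j T)
  rwa [Finset.insert_erase hj] at hinsert

lemma exists_eq_insert_of_mem_oneFactors_insert (hi : ∀ k ∈ T, i < k)
    (hF : F ∈ oneFactors (insert i T)) :
    ∃ j ∈ T, ∃ F' ∈ oneFactors (T.erase j), insert (i, j) F' = F := by
  rw [mem_oneFactors] at hF
  obtain ⟨⟨k, j⟩, ⟨hp, hip⟩, -⟩ := hF.existsUnique i (Finset.mem_insert_self i T)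
  have hlt := hF.lt _ hp
  have hk := hF.fst_mem hp
  have hj := hF.snd_mem hp
  obtain rfl : i = k := by grind
  have hjT : j ∈ T := Finset.mem_of_mem_insert_of_ne hj hlt.ne'
  refine ⟨j, hjT, F.erase (i, j), mem_oneFactors.2 ?_, Finset.insert_erase hp⟩
  have herase := hF.erase hp
  rwa [Finset.erase_insert fun h ↦ (hi i h).false] at herase

lemma eq_of_insert_eq_insert_of_mem_oneFactors (hi : ∀ k ∈ T, i < k)
    (hF : F ∈ oneFactors (T.erase j)) {j' : ι} {F' : Finset (ι × ι)}
    (hF' : F' ∈ oneFactors (T.erase j')) (h : insert (i, j) F = insert (i, j') F') :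
    j = j' ∧ F = F' := by
  have hfresh {k l : ι} {E : Finset (ι × ι)} (hE : E ∈ oneFactors (T.erase k)) : (i, l) ∉ E :=
    fun hmem ↦ (hi i (Finset.mem_of_mem_erase ((mem_oneFactors.1 hE).fst_mem hmem))).false
  obtain rfl : j = j' := by
    have hmem : (i, j) ∈ insert (i, j') F' := h ▸ Finset.mem_insert_self (i, j) F
    simpa [hfresh hF'] using hmem
  exact ⟨rfl, by rw [← Finset.erase_insert (hfresh hF), h, Finset.erase_insert (hfresh hF')]⟩

lemma neg_one_pow_crossings_insert_mul_prod [CommRing R] (w : ι → ι → R) (hi : ∀ k ∈ T, i < k)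
    (hF : F ∈ oneFactors (T.erase j)) :
    (-1) ^ (crossings (insert (i, j) F)).card * ∏ p ∈ insert (i, j) F, w p.1 p.2 =
      (-1) ^ countLT T j * (w i j * ((-1) ^ (crossings F).card * ∏ p ∈ F, w p.1 p.2)) := by
  rw [mem_oneFactors] at hF
  have hlt (p : ι × ι) (hp : p ∈ F) : i < p.1 := hi _ (Finset.mem_of_mem_erase (hF.fst_mem hp))
  have hcount : countLT (T.erase j) j = countLT T j := by
    rw [countLT, Finset.filter_erase, Finset.erase_eq_of_notMem (by simp), countLT]
  rw [card_crossings_insert hlt, pow_add,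
    hF.neg_one_pow_card_filter_eq (Finset.notMem_erase j T), hcount,
    Finset.prod_insert fun h ↦ (hlt _ h).false]
  ring

theorem pfaffian_insert [CommRing R] (w : ι → ι → R) (hi : ∀ k ∈ T, i < k) :
    pfaffian w (insert i T) =
      ∑ j ∈ T, (-1) ^ countLT T j * (w i j * pfaffian w (T.erase j)) := by
  simp only [pfaffian, Finset.mul_sum]
  rw [Finset.sum_sigma']
  symm
  refine Finset.sum_bij (fun x _ ↦ insert (i, x.1) x.2) ?_ ?_ ?_ ?_
  · rintro ⟨j, F⟩ hx
    obtain ⟨hj, hF⟩ := Finset.mem_sigma.1 hx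
    exact insert_mem_oneFactors_insert hi hj hF
  · rintro ⟨j, F⟩ hx ⟨j', F'⟩ hx' heq
    obtain ⟨rfl, rfl⟩ := eq_of_insert_eq_insert_of_mem_oneFactors hi (Finset.mem_sigma.1 hx).2
      (Finset.mem_sigma.1 hx').2 heq
    rfl
  · intro F hF
    obtain ⟨j, hj, F', hF', rfl⟩ := exists_eq_insert_of_mem_oneFactors_insert hi hF
    exact ⟨⟨j, F'⟩, Finset.mem_sigma.2 ⟨hj, hF'⟩, rfl⟩
  · rintro ⟨j, F⟩ hx
    exact (neg_one_pow_crossings_insert_mul_prod w hi (Finset.mem_sigma.1 hx).2).symm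

end Expansion

end Pfaffian

/-! ### Pfaffian condensation -/

theorem pfaffian_condensation_general {ι α : Type*} [LinearOrder ι] [DecidableEq α]
    {G : SimpleGraph α} {a : ι ↪ α} (hnc : IsNoncrossing G a) (H : Finset α) (k : ℕ)
    {T : Finset ι} (hT : T.card = 2 * k) :
    (pmCount G H : ℤ) ^ k * pmCount G (H ∆ T.map a) =
      pmCount G H * pfaffian (fun i j ↦ (pmCount G (H ∆ {a i, a j}) : ℤ)) T := by
  induction k generalizing T with
  | zero =>
    obtain rfl : T = ∅ := Finset.card_eq_zero.1 hT
    rw [pfaffian_empty, Finset.map_empty, ← Finset.bot_eq_empty, symmDiff_bot, pow_zero, one_mul,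
      mul_one]
  | succ k ih =>
    obtain ⟨i, T', hi, rfl⟩ : ∃ i T', (∀ j ∈ T', i < j) ∧ insert i T' = T := by
      have hne : T.Nonempty := Finset.card_pos.1 (by omega)
      exact ⟨T.min' hne, T.erase (T.min' hne), fun j hj ↦ T.min'_lt_of_mem_erase_min' hne hj,
        Finset.insert_erase (T.min'_mem hne)⟩
    rw [Finset.card_insert_of_notMem fun h ↦ (hi i h).false] at hT
    rw [pow_succ, mul_assoc, pmCount_mul_pmCount_symmDiff_map_insert hnc H hi,
      pfaffian_insert _ hi, Finset.mul_sum, Finset.mul_sum]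
    refine Finset.sum_congr rfl fun j hj ↦ ?_
    have hcard : (T'.erase j).card = 2 * k := by
      rw [Finset.card_erase_of_mem hj]
      omega
    linear_combination (-1 : ℤ) ^ countLT T' j * pmCount G (H ∆ {a i, a j}) * ih hcard

lemma isOneFactorOn_univ_iff {n : ℕ} {F : Finset (Fin n × Fin n)} :
    IsOneFactorOn Finset.univ F ↔ IsOneFactor n F :=
  ⟨fun h ↦ ⟨h.lt, fun v ↦ h.existsUnique v (Finset.mem_univ v)⟩,
    fun h ↦ ⟨h.1, by simp, fun v _ ↦ h.2 v⟩⟩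

open Classical in
lemma pfaffian_univ {R : Type*} [CommRing R] {n : ℕ} (w : Fin n → Fin n → R) :
    pfaffian w Finset.univ =
      ∑ F ∈ Finset.univ.filter (fun F : Finset (Fin n × Fin n) => IsOneFactor n F),
        (-1) ^ crossingNumber n F * ∏ p ∈ F, w p.1 p.2 := by
  refine Finset.sum_congr ?_ fun F _ ↦ rfl
  ext F
  rw [mem_oneFactors, isOneFactorOn_univ_iff, Finset.mem_filter_univ]

lemma univ_sdiff_symmDiff_union {α : Type*} [Fintype α] [DecidableEq α] {s t : Finset α}
    (h : Disjoint s t) : (Finset.univ \ s) ∆ (s ∪ t) = Finset.univ \ t := by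
  ext v
  have hv : v ∈ s → v ∉ t := fun hs ↦ Finset.disjoint_left.1 h hs
  simp only [Finset.mem_symmDiff, Finset.mem_sdiff, Finset.mem_univ, Finset.mem_union]
  tauto

open Classical in
/-- (Theorem 3.1.) Pfaffian generalization of graphical condensation. -/
theorem pfaffian_condensation {α : Type*} [Fintype α] [DecidableEq α]
    (G : SimpleGraph α) (n : ℕ) (hn : Even n)
    (a : Fin n → α) (hdist : (List.ofFn a).Nodup)
    (hnc : NoncrossingList G (List.ofFn a))
    (AK AH : Finset α) (hpart : AK ∪ AH = Finset.univ.image a) (hdisj : Disjoint AK AH)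
    (huniq : ∃! m : Finset (Sym2 α), IsPMOn G (Finset.univ \ AK) m) :
    (pmCount G (Finset.univ \ AH) : ℤ) =
      ∑ F ∈ Finset.univ.filter (fun F : Finset (Fin n × Fin n) => IsOneFactor n F),
        (-1 : ℤ) ^ crossingNumber n F *
          ∏ p ∈ F, (pmCount G (symmDiff (Finset.univ \ AK) {a p.1, a p.2}) : ℤ) := by
  obtain ⟨k, hk⟩ := hn.two_dvd
  have hcondense := pfaffian_condensation_general (a := ⟨a, List.nodup_ofFn.1 hdist⟩)
    hnc.isNoncrossing (Finset.univ \ AK) k ((Finset.card_fin n).trans hk)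
  simpa only [pmCount_eq_one_of_existsUnique huniq, Nat.cast_one, one_pow, one_mul,
    Finset.map_eq_image, Function.Embedding.coeFn_mk, ← hpart, univ_sdiff_symmDiff_union hdisj,
    pfaffian_univ] using hcondense
end
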